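/- Let m ≥ 1, 0 < s < 1, 1 ≤ p < ∞, d ∈ {1,…,m} with d > sp, η > 0, 0 < μ̲ < μ < μ̄ < 1 and 0 < τ < μ̲/μ. Set B₁ = B^d_{τμη} × Q^{m−d}_{(1−μ̄)η}, Q₂ = Q^d_{μ̲η} × Q^{m−d}_{(1−μ̄)η} and Q₃ = Q^d_{μη} × Q^{m−d}_{(1−μ)η}. Then there exists a smooth injective map Φ : ℝ^m → ℝ^m of the form Φ(x′, x″) = (λ(x) x′, x″) with λ : ℝ^m → [1, +∞), such that Supp Φ ⊂ Q₃ and Φ(B₁) ⊃ Q₂, and with the following property: for all c, c′ > 0 there is a constant C > 0, depending only on m, s, p, c, c′, μ̲/μ and μ/μ̄, such that for every measurable set ω with Q₂ ⊂ ω ⊂ B^m_{cμη} satisfying |B^m_λ(z) ∩ (ω \ Q₂)| ≥ c′ λ^m for every z ∈ ω \ Q₂ and 0 < λ ≤ (1/2) diam ω, and every measurable u : ω → ℝ^ν (with Φ(Φ^{-1}(ω)) ⊂ ω), one has |u ∘ Φ|_{W^{s,p}(Φ^{-1}(ω))} ≤ C |u|_{W^{s,p}(ω \ Q₂)} + C τ^{(d−sp)/p}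 |u|_{W^{s,p}(ω)} and ‖u ∘ Φ‖_{L^p(Φ^{-1}(ω))} ≤ C ‖u‖_{L^p(ω \ Q₂)} + C τ^{d/p} ‖u‖_{L^p(ω)}. -/

import Mathlib

open MeasureTheory Set Metric
open scoped ENNReal
noncomputable section

/-- `ℝ^m` with the Euclidean norm. -/
abbrev Eucl (n : ℕ) : Type := EuclideanSpace ℝ (Fin n)

/-- The `p`-th power of the Gagliardo seminorm. -/
noncomputable def gagliardoPow {α : Type*} [NormedAddCommGroup α] (m : ℕ) (σ p : ℝ)
    (A : Set (Eucl m)) (u : Eucl m → α) : ℝ≥0∞ :=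
  ∫⁻ x in A, ∫⁻ y in A, (‖u x - u y‖₊ : ℝ≥0∞) ^ p / (‖x - y‖₊ : ℝ≥0∞) ^ ((m : ℝ) + σ * p)

/-- The Gagliardo seminorm `|u|_{W^{σ,p}(A)}`. -/
noncomputable def gagliardoSeminorm {α : Type*} [NormedAddCommGroup α] (m : ℕ) (σ p : ℝ)
    (A : Set (Eucl m)) (u : Eucl m → α) : ℝ≥0∞ :=
  gagliardoPow m σ p A u ^ (1 / p)

/-- The product `Q^d_a × Q^{m-d}_b` of open cubes. -/
def rect (m d : ℕ) (a b : ℝ) : Set (Eucl m) :=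
  {x : Eucl m | ∀ i : Fin m, ((i : ℕ) < d → |x i| < a) ∧ (d ≤ (i : ℕ) → |x i| < b)}

/-- The Euclidean norm `|x′|` of the first `d` coordinates of `x ∈ ℝ^m`. -/
noncomputable def headNorm (m d : ℕ) (x : Eucl m) : ℝ :=
  Real.sqrt (∑ i : Fin m, if (i : ℕ) < d then x i ^ 2 else 0)

/-- The cylinder `B^d_a × Q^{m-d}_b`. -/
def cylinder (m d : ℕ) (a b : ℝ) : Set (Eucl m) :=
  {x : Eucl m | headNorm m d x < a ∧ ∀ i : Fin m, d ≤ (i : ℕ) → |x i| < b}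

namespace ShrinkAux

/-- Tonelli for products of one-variable functions. -/
theorem lintegral_fin_prod {n : ℕ} (f : Fin n → ℝ → ℝ≥0∞) (hf : ∀ i, Measurable (f i)) :
    ∫⁻ x : Fin n → ℝ, ∏ i, f i (x i) = ∏ i, ∫⁻ t, f i t := by
  induction n with
  | zero => simp [volume_pi]
  | succ n ih =>
    calc
      _ = ∫⁻ x : ℝ × (Fin n → ℝ), f 0 x.1 * ∏ i : Fin n, f (Fin.succ i) (x.2 i) := by
        rw [← ((volume_preserving_piFinSuccAbove (fun _ : Fin (n+1) => ℝ) 0).symm).lintegral_comp_emb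
          (MeasurableEquiv.measurableEmbedding _)]
        simp_rw [MeasurableEquiv.piFinSuccAbove_symm_apply, Fin.insertNthEquiv,
          Fin.prod_univ_succ, Fin.insertNth_zero, Equiv.coe_fn_mk, Fin.cons_succ]
        rfl
      _ = (∫⁻ t, f 0 t) * ∏ i : Fin n, ∫⁻ t, f (Fin.succ i) t := by
        rw [← ih (fun i => f (Fin.succ i)) (fun i => hf _), Measure.volume_eq_prod]
        refine lintegral_prod_mul (g := fun x : Fin n → ℝ => ∏ i, f (Fin.succ i) (x i))
          (hf 0).aemeasurable ?_
        exact (Finset.measurable_prod _ fun i _ => (hf _).comp (measurable_pi_apply i)).aemeasurable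
      _ = _ := by rw [Fin.prod_univ_succ]

/-- the one-dimensional profile -/
def psi (e g r t : ℝ) : ℝ≥0∞ := ENNReal.ofReal (max r |t|) ^ (-e) * ENNReal.ofReal |t| ^ (-g)

theorem psi_meas (e g r : ℝ) : Measurable (psi e g r) := by
  unfold psi
  fun_prop

theorem psi_one_fin (e g : ℝ) (he : 1 < e) (hg0 : 0 ≤ g) (hg : g < 1) :
    ∫⁻ t, psi e g 1 t < ∞ := by
  have hI : ∫⁻ t in Ioi (0:ℝ), psi e g 1 t < ∞ := by
    rw [← Ioc_union_Ioi_eq_Ioi (zero_le_one' ℝ)]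
    refine (lintegral_union_le _ _ _).trans_lt (ENNReal.add_lt_top.2 ⟨?_, ?_⟩)
    · have h1 : IntegrableOn (fun t : ℝ => t ^ (-g)) (Ioc 0 1) := by
        have := intervalIntegral.intervalIntegrable_rpow' (a := 0) (b := 1) (r := -g) (by linarith)
        rwa [intervalIntegrable_iff_integrableOn_Ioc_of_le zero_le_one] at this
      refine lt_of_le_of_lt ?_ h1.lintegral_lt_top
      refine setLIntegral_mono' measurableSet_Ioc ?_
      intro t ht
      unfold psi
      rw [abs_of_pos ht.1, max_eq_left ht.2, ENNReal.ofReal_one, ENNReal.one_rpow, one_mul,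
        ENNReal.ofReal_rpow_of_pos ht.1]
    · have h1 := integrableOn_Ioi_rpow_of_lt (a := -e) (c := 1) (by linarith) one_pos
      refine lt_of_le_of_lt ?_ h1.lintegral_lt_top
      refine setLIntegral_mono' measurableSet_Ioi ?_
      intro t ht
      have ht : 1 < t := ht
      have ht0 : 0 < t := by linarith
      unfold psi
      rw [abs_of_pos ht0, max_eq_right ht.le, ENNReal.ofReal_rpow_of_pos ht0,
        ENNReal.ofReal_rpow_of_pos ht0]
      calc _ ≤ ENNReal.ofReal (t ^ (-e)) * 1 := by
            gcongr
            rw [← ENNReal.ofReal_one]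
            apply ENNReal.ofReal_le_ofReal
            exact Real.rpow_le_one_of_one_le_of_nonpos ht.le (by linarith)
        _ = _ := mul_one _
  have hJ : ∫⁻ t in Iio (0:ℝ), psi e g 1 t < ∞ := by
    have : ∫⁻ t in Iio (0:ℝ), psi e g 1 t = ∫⁻ t in Ioi (0:ℝ), psi e g 1 t := by
      rw [← (Measure.measurePreserving_neg (volume : Measure ℝ)).setLIntegral_comp_preimage
        measurableSet_Ioi (psi_meas _ _ _)]
      simp [psi]
    rw [this]; exact hI
  have hK : ∫⁻ t in Iic (0:ℝ), psi e g 1 t < ∞ := by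
    rwa [← setLIntegral_congr (Iio_ae_eq_Iic)]
  rw [← setLIntegral_univ, ← Iic_union_Ioi (a := (0:ℝ))]
  exact (lintegral_union_le _ _ _).trans_lt (ENNReal.add_lt_top.2 ⟨hK, hI⟩)

theorem psi_scale (e g r : ℝ) (hr : 0 < r) :
    ∫⁻ t, psi e g r t = ENNReal.ofReal r ^ (1 - e - g) * ∫⁻ t, psi e g 1 t := by
  have h0 : ENNReal.ofReal r ≠ 0 := by simpa using hr
  have hpt : ∀ t, psi e g r (r * t) = ENNReal.ofReal r ^ (-e - g) * psi e g 1 t := by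
    intro t
    unfold psi
    have h1 : max r |r * t| = r * max 1 |t| := by
      rw [abs_mul, abs_of_pos hr, mul_max_of_nonneg _ _ hr.le, mul_one]
    rw [h1, abs_mul, abs_of_pos hr, ENNReal.ofReal_mul hr.le, ENNReal.ofReal_mul hr.le,
      ENNReal.mul_rpow_of_ne_top (by simp) (by simp), sub_eq_add_neg, ENNReal.rpow_add _ _ h0 (by simp)]
    by_cases ht : t = 0
    · subst ht
      rcases eq_or_ne g 0 with hg | hg
      · subst hg; simp
      · rcases lt_or_gt_of_ne hg with hg | hg
        · have : 0 < -g := by linarith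
          simp [ENNReal.zero_rpow_of_pos this]
        · have h3 : -g < 0 := by linarith
          have h4 : ENNReal.ofReal r ^ (-e) ≠ 0 := by simp [ENNReal.rpow_eq_zero_iff, hr]
          have h5 : ENNReal.ofReal r ^ (-g) ≠ 0 := by simp [ENNReal.rpow_eq_zero_iff, hr]
          simp [ENNReal.zero_rpow_of_neg h3, ENNReal.mul_top, h4, h5]
    · rw [ENNReal.mul_rpow_of_ne_top (by simp) (by simp)]
      ring
  conv_lhs => rw [← Real.smul_map_volume_mul_left hr.ne']
  rw [lintegral_smul_measure, lintegral_map (psi_meas _ _ _) (measurable_const_mul r)]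
  simp_rw [hpt]
  rw [lintegral_const_mul _ (psi_meas _ _ _), abs_of_pos hr, smul_eq_mul, ← mul_assoc]
  congr 1
  nth_rewrite 1 [← ENNReal.rpow_one (ENNReal.ofReal r)]
  rw [← ENNReal.rpow_add _ _ h0 (by simp)]
  congr 1; ring

end ShrinkAux

namespace ShrinkAux

theorem rpow_anti {x y : ℝ≥0∞} (h : x ≤ y) {z : ℝ} (hz : 0 ≤ z) : y ^ (-z) ≤ x ^ (-z) := by
  rw [ENNReal.rpow_neg, ENNReal.rpow_neg]
  exact ENNReal.inv_le_inv.2 (ENNReal.rpow_le_rpow h hz)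

/-- The model kernel. -/
def Wk {m : ℕ} (β : ℝ) (g : Fin m → ℝ) (H : Eucl m) : ℝ≥0∞ :=
  ‖H‖ₑ ^ (-β) * ∏ i, ‖H i‖ₑ ^ (-(g i))

theorem Wk_meas {m : ℕ} (β : ℝ) (g : Fin m → ℝ) : Measurable (Wk β g) := by
  unfold Wk
  refine (measurable_enorm.pow_const _).mul (Finset.measurable_prod _ fun i _ => ?_)
  have : Measurable fun H : Eucl m => H i := by fun_prop
  exact this.enorm.pow_const _

theorem Wk_neg {m : ℕ} (β : ℝ) (g : Fin m → ℝ) (H : Eucl m) : Wk β g (-H) = Wk β g H := by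
  simp [Wk]

theorem Wk_int {m : ℕ} (hm : 0 < m) (g : Fin m → ℝ) (hg0 : ∀ i, 0 ≤ g i) (hg1 : ∀ i, g i < 1)
    (β : ℝ) (hβ : 0 < β) :
    ∃ K : ℝ, 0 < K ∧ ∀ ρ : ℝ, 0 < ρ →
      ∫⁻ H in {H : Eucl m | ρ ≤ ‖H‖}, Wk (β + m) g H
        ≤ ENNReal.ofReal K * ENNReal.ofReal ρ ^ (-(β + ∑ i, g i)) := by
  set e : ℝ := (β + m) / m with he
  have hm' : (0:ℝ) < m := by exact_mod_cast hm
  have he1 : 1 < e := by rw [he, lt_div_iff₀ hm']; linarith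
  have hem : (m:ℝ) * e = β + m := by rw [he]; field_simp
  set P : ℝ≥0∞ := ∏ i, ∫⁻ t, psi e (g i) 1 t with hP
  have hPfin : P ≠ ∞ := ENNReal.prod_ne_top fun i _ => (psi_one_fin e (g i) he1 (hg0 i) (hg1 i)).ne
  refine ⟨P.toReal + 1, by positivity, fun ρ hρ => ?_⟩
  have hρ0 : ENNReal.ofReal ρ ≠ 0 := by simpa using hρ
  have hpt : ∀ H : Eucl m, ρ ≤ ‖H‖ → Wk (β + m) g H ≤ ∏ i, psi e (g i) ρ (H i) := by
    intro H hH
    have hH0 : 0 < ‖H‖ := hρ.trans_le hH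
    unfold Wk psi
    rw [Finset.prod_mul_distrib]
    have h1 : ‖H‖ₑ ^ (-(β + m)) = ∏ _i : Fin m, ‖H‖ₑ ^ (-e) := by
      rw [Finset.prod_const, Finset.card_univ, Fintype.card_fin, ← ENNReal.rpow_natCast,
        ← ENNReal.rpow_mul, ← hem]
      congr 1; ring
    rw [h1]
    refine mul_le_mul' (Finset.prod_le_prod' fun i _ => ?_) (Finset.prod_le_prod' fun i _ => ?_)
    · apply rpow_anti _ (by linarith)
      rw [← ofReal_norm]
      apply ENNReal.ofReal_le_ofReal
      exact max_le hH (by simpa using PiLp.norm_apply_le H i)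
    · rw [← ofReal_norm, Real.norm_eq_abs]
  calc ∫⁻ H in {H : Eucl m | ρ ≤ ‖H‖}, Wk (β + m) g H
      ≤ ∫⁻ H in {H : Eucl m | ρ ≤ ‖H‖}, ∏ i, psi e (g i) ρ (H i) :=
        setLIntegral_mono' (measurableSet_le measurable_const measurable_norm) hpt
    _ ≤ ∫⁻ H : Eucl m, ∏ i, psi e (g i) ρ (H i) := setLIntegral_le_lintegral _ _
    _ = ∫⁻ x : Fin m → ℝ, ∏ i, psi e (g i) ρ (x i) := by
        rw [← (PiLp.volume_preserving_toLp (Fin m)).lintegral_comp_emb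
          (MeasurableEquiv.toLp 2 (Fin m → ℝ)).measurableEmbedding]
    _ = ∏ i, ∫⁻ t, psi e (g i) ρ t := lintegral_fin_prod _ fun i => psi_meas _ _ _
    _ = ∏ i, (ENNReal.ofReal ρ ^ (1 - e - g i) * ∫⁻ t, psi e (g i) 1 t) := by
        simp_rw [psi_scale e _ ρ hρ]
    _ = (ENNReal.ofReal ρ) ^ (-(β + ∑ i, g i)) * P := by
        rw [Finset.prod_mul_distrib, ← hP]
        congr 1
        have : ∀ s : Finset (Fin m), ∏ i ∈ s, ENNReal.ofReal ρ ^ (1 - e - g i)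
            = ENNReal.ofReal ρ ^ (∑ i ∈ s, (1 - e - g i)) := by
          intro s
          induction s using Finset.induction_on with
          | empty => simp
          | insert a s ha ih =>
            rw [Finset.prod_insert ha, Finset.sum_insert ha, ih, ENNReal.rpow_add _ _ hρ0 (by simp)]
        rw [this]
        congr 1
        rw [Finset.sum_sub_distrib, Finset.sum_const, Finset.card_univ, Fintype.card_fin,
          nsmul_eq_mul, mul_sub, hem]
        ring
    _ ≤ _ := by
        rw [mul_comm]
        gcongr
        rw [← ENNReal.ofReal_toReal hPfin]
        apply ENNReal.ofReal_le_ofReal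
        simp

end ShrinkAux

namespace ShrinkAux

/-- Auxiliary triple kernel. -/
def Tk {m ν : ℕ} (p β : ℝ) (g : Fin m → ℝ) (u : Eucl m → Eucl ν) (X Y Z : Eucl m) : ℝ≥0∞ :=
  if ‖X - Z‖ / 2 ≤ ‖X - Y‖ then Wk (β + m) g (X - Y) * ‖u X - u Z‖ₑ ^ p else 0

theorem Tk_meas {m ν : ℕ} (p β : ℝ) (g : Fin m → ℝ) (u : Eucl m → Eucl ν) (hu : Measurable u)
    {α : Type*} [MeasurableSpace α] {f₁ f₂ f₃ : α → Eucl m} (h₁ : Measurable f₁)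
    (h₂ : Measurable f₂) (h₃ : Measurable f₃) :
    Measurable (fun q => Tk p β g u (f₁ q) (f₂ q) (f₃ q)) := by
  unfold Tk
  refine Measurable.ite ?_ ?_ measurable_const
  · exact measurableSet_le ((h₁.sub h₃).norm.div_const 2) (h₁.sub h₂).norm
  · refine Measurable.mul ?_ ?_
    · exact (Wk_meas _ _).comp (h₁.sub h₂)
    · exact (((hu.comp h₁).sub (hu.comp h₃)).enorm).pow_const _

theorem Tk_int {m ν : ℕ} {p β θ K : ℝ} (hp : 1 ≤ p) {g : Fin m → ℝ}
    (hK : ∀ ρ : ℝ, 0 < ρ → ∫⁻ H in {H : Eucl m | ρ ≤ ‖H‖}, Wk (β + m) g H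
        ≤ ENNReal.ofReal K * ENNReal.ofReal ρ ^ (-θ)) (hK0 : 0 < K)
    (u : Eucl m → Eucl ν) (X Z : Eucl m) :
    ∫⁻ Y, Tk p β g u X Y Z ≤
      ENNReal.ofReal (K * 2 ^ θ) * (‖u X - u Z‖ₑ ^ p / ‖X - Z‖ₑ ^ θ) := by
  rcases eq_or_ne X Z with h | h
  · subst h
    have : ∀ Y, Tk p β g u X Y X = 0 := by
      intro Y
      unfold Tk
      simp [ENNReal.zero_rpow_of_pos (show 0 < p by linarith)]
    simp [this]
  have hpos : 0 < ‖X - Z‖ := norm_pos_iff.2 (sub_ne_zero.2 h)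
  have hms : MeasurableSet {H : Eucl m | ‖X - Z‖ / 2 ≤ ‖H‖} :=
    measurableSet_le measurable_const measurable_norm
  calc ∫⁻ Y, Tk p β g u X Y Z
      = ∫⁻ Y, ({H : Eucl m | ‖X - Z‖ / 2 ≤ ‖H‖}.indicator (Wk (β + m) g) (X - Y))
          * ‖u X - u Z‖ₑ ^ p := by
        congr 1; ext Y
        unfold Tk
        by_cases hh : ‖X - Z‖ / 2 ≤ ‖X - Y‖ <;> simp [indicator, hh]
    _ = (∫⁻ Y, ({H : Eucl m | ‖X - Z‖ / 2 ≤ ‖H‖}.indicator (Wk (β + m) g) (X - Y)))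
          * ‖u X - u Z‖ₑ ^ p := by
        rw [lintegral_mul_const]
        exact ((Wk_meas _ _).indicator hms).comp (measurable_const.sub measurable_id)
    _ = (∫⁻ H in {H : Eucl m | ‖X - Z‖ / 2 ≤ ‖H‖}, Wk (β + m) g H) * ‖u X - u Z‖ₑ ^ p := by
        rw [lintegral_sub_left_eq_self
          (fun H => {H : Eucl m | ‖X - Z‖ / 2 ≤ ‖H‖}.indicator (Wk (β + m) g) H) X,
          lintegral_indicator hms]
    _ ≤ (ENNReal.ofReal K * ENNReal.ofReal (‖X - Z‖ / 2) ^ (-θ)) * ‖u X - u Z‖ₑ ^ p := by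
        gcongr
        exact hK _ (by positivity)
    _ = _ := by
        have h1 : ENNReal.ofReal (‖X - Z‖ / 2) ^ (-θ)
            = ENNReal.ofReal (2 ^ θ) * (‖X - Z‖ₑ ^ θ)⁻¹ := by
          rw [← ofReal_norm, ENNReal.ofReal_rpow_of_pos (by positivity),
            ENNReal.ofReal_rpow_of_pos hpos, ← ENNReal.ofReal_inv_of_pos (by positivity),
            ← ENNReal.ofReal_mul (by positivity)]
          congr 1
          rw [Real.div_rpow hpos.le (by norm_num), Real.rpow_neg hpos.le,
            Real.rpow_neg (by norm_num)]
          field_simp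
        rw [h1, ENNReal.ofReal_mul hK0.le, div_eq_mul_inv]
        ring

theorem Tk_int3 {m ν : ℕ} {p β θ K : ℝ} (hp : 1 ≤ p) {g : Fin m → ℝ}
    (hK : ∀ ρ : ℝ, 0 < ρ → ∫⁻ H in {H : Eucl m | ρ ≤ ‖H‖}, Wk (β + m) g H
        ≤ ENNReal.ofReal K * ENNReal.ofReal ρ ^ (-θ)) (hK0 : 0 < K)
    (u : Eucl m → Eucl ν) (hu : Measurable u) (E₁ G E : Set (Eucl m)) :
    ∫⁻ X in E₁, ∫⁻ Y in G, ∫⁻ Z in E, Tk p β g u X Y Z ≤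
      ENNReal.ofReal (K * 2 ^ θ) *
        ∫⁻ X in E₁, ∫⁻ Z in E, ‖u X - u Z‖ₑ ^ p / ‖X - Z‖ₑ ^ θ := by
  rw [← lintegral_const_mul' _ _ ENNReal.ofReal_ne_top]
  refine lintegral_mono fun X => ?_
  rw [lintegral_lintegral_swap, ← lintegral_const_mul' _ _ ENNReal.ofReal_ne_top]
  · refine lintegral_mono fun Z => ?_
    exact (setLIntegral_le_lintegral _ _).trans (Tk_int hp hK hK0 u X Z)
  · exact (Tk_meas p β g u hu measurable_const measurable_fst measurable_snd).aemeasurable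

theorem avg_key {m ν : ℕ} {p β : ℝ} (hp : 1 ≤ p) {g : Fin m → ℝ}
    (u : Eucl m → Eucl ν) (hu : Measurable u) (E : Set (Eucl m))
    (hE : MeasurableSet E) (c : ℝ) (hc : 0 < c) (X Y : Eucl m)
    (hreg : X ≠ Y → ENNReal.ofReal (c * (‖X - Y‖ / 2) ^ m) ≤
      volume (ball X (‖X - Y‖ / 2) ∩ E)) :
    ‖u X - u Y‖ₑ ^ p * Wk β g (X - Y) ≤ ENNReal.ofReal (2 ^ (p - 1) * 2 ^ m / c) *
      ((∫⁻ Z in E, Tk p β g u X Y Z) + ∫⁻ Z in E, Tk p β g u Y X Z) := by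
  have hmTX : ∀ X Y, Measurable (fun Z => Tk p β g u X Y Z) := fun X Y =>
    Tk_meas p β g u hu measurable_const measurable_const measurable_id
  rcases eq_or_ne X Y with h | h
  · subst h
    simp [ENNReal.zero_rpow_of_pos (show 0 < p by linarith)]
  have hpos : 0 < ‖X - Y‖ := norm_pos_iff.2 (sub_ne_zero.2 h)
  set t := ‖X - Y‖ / 2 with ht
  have hW : Wk β g (X - Y) = ENNReal.ofReal (‖X - Y‖ ^ m) * Wk (β + m) g (X - Y) := by
    unfold Wk
    rw [← mul_assoc]
    congr 1
    rw [ENNReal.ofReal_pow hpos.le, ofReal_norm, ← ENNReal.rpow_natCast, ← ENNReal.rpow_add]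
    · congr 1; ring
    · simpa [sub_eq_zero] using h
    · simp
  have h1 : ENNReal.ofReal (‖X - Y‖ ^ m) ≤
      ENNReal.ofReal (2 ^ m / c) * volume (ball X t ∩ E) := by
    calc ENNReal.ofReal (‖X - Y‖ ^ m) = ENNReal.ofReal (2 ^ m / c) * ENNReal.ofReal (c * t ^ m) := by
          rw [← ENNReal.ofReal_mul (by positivity)]
          congr 1
          rw [ht, div_pow]; field_simp
      _ ≤ _ := by gcongr; exact hreg h
  have h2 : ∀ Z ∈ ball X t, ‖u X - u Y‖ₑ ^ p * Wk (β + m) g (X - Y) ≤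
      ENNReal.ofReal (2 ^ (p - 1)) * (Tk p β g u X Y Z + Tk p β g u Y X Z) := by
    intro Z hZ
    rw [mem_ball, dist_comm, dist_eq_norm] at hZ
    have hYZ : ‖Y - Z‖ ≤ ‖X - Y‖ + ‖X - Z‖ := by
      rw [norm_sub_rev X Y]
      calc ‖Y - Z‖ = ‖(Y - X) + (X - Z)‖ := by congr 1; abel
        _ ≤ _ := norm_add_le _ _
    have e1 : ‖X - Z‖ / 2 ≤ ‖X - Y‖ := by linarith
    have e2 : ‖Y - Z‖ / 2 ≤ ‖Y - X‖ := by rw [norm_sub_rev Y X]; linarith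
    unfold Tk
    rw [if_pos e1, if_pos e2, ← neg_sub X Y, Wk_neg, ← mul_add, mul_comm, ← mul_assoc,
      mul_comm (ENNReal.ofReal _), mul_assoc]
    gcongr
    calc ‖u X - u Y‖ₑ ^ p ≤ (‖u X - u Z‖ₑ + ‖u Y - u Z‖ₑ) ^ p := by
          apply ENNReal.rpow_le_rpow _ (by linarith)
          have := enorm_sub_le (a := u X - u Z) (b := u Y - u Z)
          simpa using this
      _ ≤ _ := by
          refine (ENNReal.rpow_add_le_mul_rpow_add_rpow _ _ hp).trans (le_of_eq ?_)
          rw [← ENNReal.ofReal_rpow_of_pos (by norm_num)]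
          simp
  calc ‖u X - u Y‖ₑ ^ p * Wk β g (X - Y)
      ≤ ENNReal.ofReal (2 ^ m / c) *
        ∫⁻ Z in ball X t ∩ E, ‖u X - u Y‖ₑ ^ p * Wk (β + m) g (X - Y) := by
        rw [setLIntegral_const, hW]
        calc _ = (‖u X - u Y‖ₑ ^ p * Wk (β + m) g (X - Y)) * ENNReal.ofReal (‖X - Y‖ ^ m) := by ring
          _ ≤ (‖u X - u Y‖ₑ ^ p * Wk (β + m) g (X - Y)) *
                (ENNReal.ofReal (2 ^ m / c) * volume (ball X t ∩ E)) := by gcongr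
          _ = _ := by ring
    _ ≤ ENNReal.ofReal (2 ^ m / c) * ∫⁻ Z in ball X t ∩ E,
          ENNReal.ofReal (2 ^ (p - 1)) * (Tk p β g u X Y Z + Tk p β g u Y X Z) := by
        refine mul_le_mul' le_rfl ?_
        exact setLIntegral_mono' (measurableSet_ball.inter hE) fun Z hZ => h2 Z hZ.1
    _ ≤ ENNReal.ofReal (2 ^ m / c) * ∫⁻ Z in E,
          ENNReal.ofReal (2 ^ (p - 1)) * (Tk p β g u X Y Z + Tk p β g u Y X Z) := by
        refine mul_le_mul' le_rfl ?_
        exact lintegral_mono_set inter_subset_right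
    _ = _ := by
        rw [lintegral_const_mul' _ _ ENNReal.ofReal_ne_top, lintegral_add_left, ← mul_assoc,
          ← ENNReal.ofReal_mul (by positivity)]
        · congr 2
          ring
        · exact hmTX X Y
theorem Tk_meas2 {m ν : ℕ} (p β : ℝ) (g : Fin m → ℝ) (u : Eucl m → Eucl ν) (hu : Measurable u)
    (E : Set (Eucl m))
    {α : Type*} [MeasurableSpace α] {f₁ f₂ : α → Eucl m} (h₁ : Measurable f₁)
    (h₂ : Measurable f₂) :
    Measurable (fun q => ∫⁻ Z in E, Tk p β g u (f₁ q) (f₂ q) Z) := by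
  apply Measurable.lintegral_prod_right'
    (f := fun q : α × Eucl m => Tk p β g u (f₁ q.1) (f₂ q.1) q.2)
  exact Tk_meas p β g u hu (h₁.comp measurable_fst) (h₂.comp measurable_fst) measurable_snd

theorem averaging {m ν : ℕ} {p β θ K : ℝ} (hp : 1 ≤ p) {g : Fin m → ℝ}
    (hK : ∀ ρ : ℝ, 0 < ρ → ∫⁻ H in {H : Eucl m | ρ ≤ ‖H‖}, Wk (β + m) g H
        ≤ ENNReal.ofReal K * ENNReal.ofReal ρ ^ (-θ)) (hK0 : 0 < K)
    (u : Eucl m → Eucl ν) (hu : Measurable u) (E G : Set (Eucl m))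
    (hE : MeasurableSet E) (hG : MeasurableSet G) (c : ℝ) (hc : 0 < c)
    (hreg : ∀ X ∈ E, ∀ Y ∈ G, X ≠ Y → ENNReal.ofReal (c * (‖X - Y‖ / 2) ^ m) ≤
      volume (ball X (‖X - Y‖ / 2) ∩ E)) :
    ∫⁻ X in E, ∫⁻ Y in G, ‖u X - u Y‖ₑ ^ p * Wk β g (X - Y) ≤
      ENNReal.ofReal (2 ^ (p - 1) * 2 ^ m * (K * 2 ^ θ) / c) *
        ((∫⁻ X in E, ∫⁻ Z in E, ‖u X - u Z‖ₑ ^ p / ‖X - Z‖ₑ ^ θ) +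
         (∫⁻ Y in G, ∫⁻ Z in E, ‖u Y - u Z‖ₑ ^ p / ‖Y - Z‖ₑ ^ θ)) := by
  calc ∫⁻ X in E, ∫⁻ Y in G, ‖u X - u Y‖ₑ ^ p * Wk β g (X - Y)
      ≤ ∫⁻ X in E, ∫⁻ Y in G, ENNReal.ofReal (2 ^ (p - 1) * 2 ^ m / c) *
          ((∫⁻ Z in E, Tk p β g u X Y Z) + ∫⁻ Z in E, Tk p β g u Y X Z) :=
        setLIntegral_mono' hE fun X hX => setLIntegral_mono' hG fun Y hY => 
          avg_key hp u hu E hE c hc X Y (hreg X hX Y hY)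
    _ = ENNReal.ofReal (2 ^ (p - 1) * 2 ^ m / c) * ((∫⁻ X in E, ∫⁻ Y in G, ∫⁻ Z in E, Tk p β g u X Y Z)
          + ∫⁻ X in E, ∫⁻ Y in G, ∫⁻ Z in E, Tk p β g u Y X Z) := by
        rw [← lintegral_add_left, ← lintegral_const_mul' _ _ ENNReal.ofReal_ne_top]
        · refine lintegral_congr fun X => ?_
          rw [← lintegral_add_left, ← lintegral_const_mul' _ _ ENNReal.ofReal_ne_top]
          exact Tk_meas2 p β g u hu E measurable_const measurable_id
        · exact Measurable.lintegral_prod_right'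
            (f := fun q : Eucl m × Eucl m => ∫⁻ Z in E, Tk p β g u q.1 q.2 Z)
            (Tk_meas2 p β g u hu E measurable_fst measurable_snd)
    _ = ENNReal.ofReal (2 ^ (p - 1) * 2 ^ m / c) * ((∫⁻ X in E, ∫⁻ Y in G, ∫⁻ Z in E, Tk p β g u X Y Z)
          + ∫⁻ Y in G, ∫⁻ X in E, ∫⁻ Z in E, Tk p β g u Y X Z) := by
        congr 2
        apply lintegral_lintegral_swap
        exact (Tk_meas2 p β g u hu E measurable_snd measurable_fst).aemeasurable
    _ ≤ ENNReal.ofReal (2 ^ (p - 1) * 2 ^ m / c) * (ENNReal.ofReal (K * 2 ^ θ) *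
          (∫⁻ X in E, ∫⁻ Z in E, ‖u X - u Z‖ₑ ^ p / ‖X - Z‖ₑ ^ θ) + ENNReal.ofReal (K * 2 ^ θ) *
          (∫⁻ Y in G, ∫⁻ Z in E, ‖u Y - u Z‖ₑ ^ p / ‖Y - Z‖ₑ ^ θ)) := by
        gcongr
        · exact Tk_int3 hp hK hK0 u hu E G E
        · exact Tk_int3 hp hK hK0 u hu G E E
    _ = _ := by
        rw [← mul_add, ← mul_assoc, ← ENNReal.ofReal_mul (by positivity)]
        congr 2
        ring

theorem convex_reg {m : ℕ} (Q : Set (Eucl m)) (hQ : Convex ℝ Q) (hb : Bornology.IsBounded Q)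
    (hv : 0 < volume Q) :
    ∃ c : ℝ, 0 < c ∧ ∀ X ∈ Q, ∀ Y ∈ Q, X ≠ Y → ENNReal.ofReal (c * (‖X - Y‖ / 2) ^ m) ≤
      volume (ball X (‖X - Y‖ / 2) ∩ Q) := by
  have hfin : volume Q ≠ ∞ := hb.measure_lt_top.ne
  set R : ℝ := Metric.diam Q + 1 with hR
  have hR0 : 0 < R := by have := Metric.diam_nonneg (s := Q); linarith
  have hv' : 0 < (volume Q).toReal := ENNReal.toReal_pos hv.ne' hfin
  refine ⟨(volume Q).toReal / R ^ m, by positivity, fun X hX Y hY hXY => ?_⟩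
  have hpos : 0 < ‖X - Y‖ := norm_pos_iff.2 (sub_ne_zero.2 hXY)
  set t := ‖X - Y‖ / 2 with ht
  have ht0 : 0 < t := by positivity
  have htR : t / R ≤ 1 := by
    rw [div_le_one hR0]
    have := Metric.dist_le_diam_of_mem hb hX hY
    rw [dist_eq_norm] at this
    linarith
  have hsub : AffineMap.homothety X (t / R) '' Q ⊆ ball X t ∩ Q := by
    rintro _ ⟨Z, hZ, rfl⟩
    have hd := Metric.dist_le_diam_of_mem hb hZ hX
    rw [dist_eq_norm] at hd
    constructor
    · rw [mem_ball, dist_eq_norm, AffineMap.homothety_apply]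
      simp only [vsub_eq_sub, vadd_eq_add, add_sub_cancel_right, norm_smul, Real.norm_eq_abs]
      rw [abs_of_pos (by positivity)]
      calc t / R * ‖Z - X‖ < t / R * R := by gcongr; linarith
        _ = t := by field_simp
    · rw [AffineMap.homothety_eq_lineMap]
      exact hQ.lineMap_mem hX hZ ⟨by positivity, htR⟩
  refine le_trans (le_of_eq ?_) (measure_mono hsub)
  rw [Measure.addHaar_image_homothety, finrank_euclideanSpace_fin, abs_of_pos (by positivity)]
  nth_rewrite 2 [← ENNReal.ofReal_toReal hfin]
  rw [← ENNReal.ofReal_mul (by positivity)]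
  congr 1
  simp only [ht, div_pow]; field_simp

end ShrinkAux

namespace ShrinkAux

/-- The smooth transition is Lipschitz with bounded derivative. -/
theorem exists_sK : ∃ K : ℝ, 1 ≤ K ∧ (∀ x y : ℝ, |Real.smoothTransition x - Real.smoothTransition y|
    ≤ K * |x - y|) ∧ ∀ x, deriv Real.smoothTransition x ≤ K := by
  have hc : ContDiff ℝ 1 Real.smoothTransition := Real.smoothTransition.contDiff
  have hd : Continuous (deriv Real.smoothTransition) := hc.continuous_deriv le_rfl
  have hdiff : Differentiable ℝ Real.smoothTransition := hc.differentiable (by norm_num)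
  obtain ⟨K, hK⟩ := (isCompact_Icc (a := (0:ℝ)) (b := 1)).exists_bound_of_continuousOn hd.continuousOn
  have hall : ∀ x, ‖deriv Real.smoothTransition x‖ ≤ max K 1 := by
    intro x
    by_cases hx : x ∈ Icc (0:ℝ) 1
    · exact (hK x hx).trans (le_max_left _ _)
    · have : deriv Real.smoothTransition x = 0 := by
        simp only [mem_Icc, not_and_or, not_le] at hx
        rcases hx with hx | hx
        · have : Real.smoothTransition =ᶠ[nhds x] fun _ => 0 := by
            filter_upwards [Iio_mem_nhds hx] with y hy
            exact Real.smoothTransition.zero_of_nonpos (le_of_lt hy)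
          rw [this.deriv_eq]; simp
        · have : Real.smoothTransition =ᶠ[nhds x] fun _ => 1 := by
            filter_upwards [Ioi_mem_nhds hx] with y hy
            exact Real.smoothTransition.one_of_one_le (le_of_lt hy)
          rw [this.deriv_eq]; simp
      rw [this]; simp
  refine ⟨max K 1, le_max_right _ _, fun x y => ?_, fun x => (le_abs_self _).trans (hall x)⟩
  have := Convex.norm_image_sub_le_of_norm_deriv_le (f := Real.smoothTransition) (s := univ)
    (fun x _ => hdiff x) (fun x _ => hall x) convex_univ (mem_univ y) (mem_univ x)
  simpa [Real.norm_eq_abs] using this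

def sK : ℝ := exists_sK.choose
theorem one_le_sK : 1 ≤ sK := exists_sK.choose_spec.1
theorem sK_lip (x y : ℝ) : |Real.smoothTransition x - Real.smoothTransition y| ≤ sK * |x - y| :=
  exists_sK.choose_spec.2.1 x y
theorem sK_deriv (x : ℝ) : deriv Real.smoothTransition x ≤ sK := exists_sK.choose_spec.2.2 x
theorem st_mono : Monotone Real.smoothTransition := Real.smoothTransition.monotone

/-- Parameters of the construction. -/
structure Par (m : ℕ) where
  (d n q : ℕ)
  (L B v a δ ρ : ℝ)
  (hn : 1 ≤ n) (hq : 1 ≤ q) (hqe : Even q)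
  (hL : 0 < L) (hB : 0 < B) (hv : 0 < v) (ha0 : 0 ≤ a) (ha1 : a < 1) (hδ0 : 0 < δ) (hδ1 : δ < 1)
  (hd1 : 1 ≤ d) (hdm : d ≤ m)
  (hρ0 : 0 < ρ) (hρ : m * ρ ^ q ≤ a)

theorem exists_seminorm (m d q : ℕ) (hq : 1 ≤ q) (hqe : Even q) :
    ∃ N : Seminorm ℝ (Eucl m), ∀ X, N X ^ q = ∑ i : Fin m, if (i : ℕ) < d then (X i) ^ q else 0 := by
  haveI : Fact ((1:ℝ≥0∞) ≤ (q:ℝ≥0∞)) := ⟨by exact_mod_cast hq⟩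
  let T : Eucl m →ₗ[ℝ] PiLp (q:ℝ≥0∞) (fun _ : Fin m => ℝ) :=
    { toFun := fun X => WithLp.toLp _ (fun i : Fin m => if (i : ℕ) < d then X i else 0)
      map_add' := by intro x y; ext i; simp only [PiLp.add_apply]; split_ifs <;> simp
      map_smul' := by intro x y; ext i; simp only [PiLp.smul_apply, RingHom.id_apply]; split_ifs <;> simp }
  refine ⟨(normSeminorm ℝ _).comp T, fun X => ?_⟩
  have : ((normSeminorm ℝ _).comp T) X = ‖T X‖ := rfl
  rw [this, PiLp.norm_eq_of_nat q rfl, ← Real.rpow_natCast, ← Real.rpow_mul (by positivity)]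
  have hq0 : (q:ℝ) ≠ 0 := by positivity
  rw [one_div_mul_cancel hq0, Real.rpow_one]
  refine Finset.sum_congr rfl fun i _ => ?_
  simp only [T, LinearMap.coe_mk, AddHom.coe_mk, Real.norm_eq_abs, hqe.pow_abs]
  split_ifs
  · rfl
  · simp; omega

namespace Par
variable {m : ℕ} (P : Par m)

def hS (X : Eucl m) : ℝ := ∑ i : Fin m, if (i : ℕ) < P.d then (X i / P.L) ^ P.q else 0
def tl (X : Eucl m) : ℝ :=
  ∑ i : Fin m, if (i : ℕ) < P.d then 0 else (Real.smoothTransition ((X i - P.B) / P.v) + Real.smoothTransition ((-X i - P.B) / P.v))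
def hE (X : Eucl m) : ℝ := Real.smoothTransition ((P.hS X - P.a) / (1 - P.a)) + P.tl X
def f (X : Eucl m) : ℝ := P.δ + (1 - P.δ) * Real.smoothTransition (P.hE X)
def kap (X : Eucl m) : ℝ := P.f X ^ P.n
/-- head projection -/
def hP : Eucl m →L[ℝ] Eucl m :=
  LinearMap.toContinuousLinearMap
    { toFun := fun X => WithLp.toLp 2 (fun i : Fin m => if (i : ℕ) < P.d then X i else 0)
      map_add' := by intro x y; ext i; simp only [PiLp.add_apply]; split_ifs <;> simp
      map_smul' := by intro x y; ext i; simp only [PiLp.smul_apply, RingHom.id_apply]; split_ifs <;> simp }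
@[simp] theorem hP_apply (X : Eucl m) (i : Fin m) : P.hP X i = if (i : ℕ) < P.d then X i else 0 := rfl
def Psi (X : Eucl m) : Eucl m := X + (P.kap X - 1) • P.hP X

theorem Psi_head (X : Eucl m) (i : Fin m) (hi : (i:ℕ) < P.d) : P.Psi X i = P.kap X * X i := by
  simp [Psi, hi]; ring
theorem Psi_tail (X : Eucl m) (i : Fin m) (hi : P.d ≤ (i:ℕ)) : P.Psi X i = X i := by
  simp [Psi, Nat.not_lt.2 hi]

theorem f_le (X : Eucl m) : P.f X ≤ 1 := by
  have := Real.smoothTransition.le_one (P.hE X); have := P.hδ1; unfold f; nlinarith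
theorem le_f (X : Eucl m) : P.δ ≤ P.f X := by
  have := Real.smoothTransition.nonneg (P.hE X); have := P.hδ1; unfold f; nlinarith
theorem f_pos (X : Eucl m) : 0 < P.f X := P.hδ0.trans_le (P.le_f X)
theorem kap_pos (X : Eucl m) : 0 < P.kap X := pow_pos (P.f_pos X) _
theorem kap_le (X : Eucl m) : P.kap X ≤ 1 := pow_le_one₀ (P.f_pos X).le (P.f_le X)
theorem le_kap (X : Eucl m) : P.δ ^ P.n ≤ P.kap X := pow_le_pow_left₀ P.hδ0.le (P.le_f X) _

theorem tl_nonneg (X : Eucl m) : 0 ≤ P.tl X := by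
  refine Finset.sum_nonneg fun i _ => ?_
  split_ifs
  · rfl
  · exact add_nonneg (Real.smoothTransition.nonneg _) (Real.smoothTransition.nonneg _)

theorem f_one_of (X : Eucl m) (h : 1 ≤ P.hE X) : P.f X = 1 := by
  unfold f; rw [Real.smoothTransition.one_of_one_le h]; ring
theorem f_one_of_hS (X : Eucl m) (h : 1 ≤ P.hS X) : P.f X = 1 := by
  apply f_one_of
  unfold hE
  have h1 : 0 < 1 - P.a := by linarith [P.ha1]
  rw [Real.smoothTransition.one_of_one_le ((one_le_div h1).2 (by linarith))]
  linarith [P.tl_nonneg X]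

theorem hS_term_nonneg (X : Eucl m) (i : Fin m) : 0 ≤ if (i : ℕ) < P.d then (X i / P.L) ^ P.q else 0 := by
  split_ifs
  · exact P.hqe.pow_nonneg _
  · rfl

theorem f_one_out (X : Eucl m) (h : X ∉ rect m P.d P.L (P.B + P.v)) : P.f X = 1 := by
  simp only [rect, mem_setOf_eq, not_forall, not_and_or, not_lt] at h
  obtain ⟨i, ⟨hi, h⟩ | ⟨hi, h⟩⟩ := h
  · apply f_one_of_hS
    have h1 : 1 ≤ (X i / P.L) ^ P.q := by
      rw [← P.hqe.pow_abs]
      apply one_le_pow₀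
      rw [abs_div, abs_of_pos P.hL]
      exact (one_le_div P.hL).2 h
    calc (1:ℝ) ≤ if (i : ℕ) < P.d then (X i / P.L) ^ P.q else 0 := by rw [if_pos hi]; exact h1
      _ ≤ _ := Finset.single_le_sum (f := fun i : Fin m => if (i : ℕ) < P.d then (X i / P.L) ^ P.q else 0)
          (fun i _ => P.hS_term_nonneg X i) (Finset.mem_univ i)
  · apply f_one_of
    have h1 : 1 ≤ Real.smoothTransition ((X i - P.B) / P.v) + Real.smoothTransition ((-X i - P.B) / P.v) := by
      rcases le_abs.1 h with h | h
      · rw [Real.smoothTransition.one_of_one_le ((one_le_div P.hv).2 (by linarith))]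
        linarith [Real.smoothTransition.nonneg ((-X i - P.B) / P.v)]
      · rw [Real.smoothTransition.one_of_one_le (x := (-X i - P.B) / P.v) ((one_le_div P.hv).2 (by linarith))]
        linarith [Real.smoothTransition.nonneg ((X i - P.B) / P.v)]
    have h2 : 1 ≤ P.tl X := by
      calc (1:ℝ) ≤ if (i : ℕ) < P.d then 0 else (Real.smoothTransition ((X i - P.B) / P.v) + Real.smoothTransition ((-X i - P.B) / P.v)) := by
            rw [if_neg (by omega)]; exact h1
        _ ≤ _ := Finset.single_le_sum (f := fun i : Fin m => if (i : ℕ) < P.d then (0:ℝ) else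
            (Real.smoothTransition ((X i - P.B) / P.v) + Real.smoothTransition ((-X i - P.B) / P.v))) (fun i _ => by
              dsimp only
              split_ifs
              · rfl
              · exact add_nonneg (Real.smoothTransition.nonneg _) (Real.smoothTransition.nonneg _)) (Finset.mem_univ i)
    unfold hE
    linarith [Real.smoothTransition.nonneg ((P.hS X - P.a) / (1 - P.a))]

theorem f_eq_in (X : Eucl m) (h : X ∈ rect m P.d (P.ρ * P.L) P.B) : P.f X = P.δ := by
  have h1 : P.hS X ≤ P.a := by
    refine le_trans ?_ P.hρ
    calc P.hS X ≤ ∑ i : Fin m, P.ρ ^ P.q := by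
          refine Finset.sum_le_sum fun i _ => ?_
          split_ifs with hi
          · rw [← P.hqe.pow_abs]
            refine pow_le_pow_left₀ (abs_nonneg _) ?_ _
            rw [abs_div, abs_of_pos P.hL, div_le_iff₀ P.hL]
            exact ((h i).1 hi).le
          · exact pow_nonneg P.hρ0.le _
      _ = m * P.ρ ^ P.q := by simp
  have h2 : P.tl X = 0 := by
    refine Finset.sum_eq_zero fun i _ => ?_
    split_ifs with hi
    · rfl
    · have := abs_lt.1 ((h i).2 (by omega))
      rw [Real.smoothTransition.zero_of_nonpos (div_nonpos_of_nonpos_of_nonneg (by linarith) P.hv.le),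
        Real.smoothTransition.zero_of_nonpos (div_nonpos_of_nonpos_of_nonneg (by linarith) P.hv.le)]
      simp
  have h3 : P.hE X = 0 := by
    unfold hE
    rw [h2, Real.smoothTransition.zero_of_nonpos (div_nonpos_of_nonpos_of_nonneg (by linarith) (by linarith [P.ha1]))]
    simp
  unfold f
  rw [h3, Real.smoothTransition.zero]; simp

theorem Psi_out (X : Eucl m) (h : X ∉ rect m P.d P.L (P.B + P.v)) : P.Psi X = X := by
  simp [Psi, kap, P.f_one_out X h]

end Par

theorem semi_key {E : Type*} [AddCommGroup E] [Module ℝ E] (N : Seminorm ℝ E) (x y : E) (a b : ℝ)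
    (h : N x ≤ N y) (ha : 0 ≤ a) (hab : a ≤ b) : b * N (y - x) ≤ 2 * N (b • y - a • x) := by
  have h1 : b * N (y - x) ≤ N (b • y - a • x) + (b - a) * N x := by
    have e : b • (y - x) = (b • y - a • x) - (b - a) • x := by module
    calc b * N (y - x) = N (b • (y - x)) := by rw [map_smul_eq_mul, Real.norm_of_nonneg (ha.trans hab)]
      _ ≤ _ := by
        rw [e]; refine (map_sub_le_add N _ _).trans ?_
        rw [map_smul_eq_mul, Real.norm_of_nonneg (sub_nonneg.2 hab)]
  have h2 : b * N y ≤ N (b • y - a • x) + a * N x := by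
    have e : b • y = (b • y - a • x) + a • x := by module
    calc b * N y = N (b • y) := by rw [map_smul_eq_mul, Real.norm_of_nonneg (ha.trans hab)]
      _ ≤ N (b • y - a • x) + N (a • x) := by conv_lhs => rw [e]
                                              exact map_add_le_add N _ _
      _ = _ := by rw [map_smul_eq_mul, Real.norm_of_nonneg ha]
  have h3 : b * N x ≤ b * N y := mul_le_mul_of_nonneg_left h (ha.trans hab)
  linarith

end ShrinkAux

namespace ShrinkAux
namespace Par
variable {m : ℕ} (P : Par m)

theorem coord_le (X : Eucl m) (i : Fin m) : |X i| ≤ ‖X‖ := PiLp.norm_apply_le X i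

theorem norm_le_sum (X : Eucl m) : ‖X‖ ≤ ∑ i, |X i| := by
  rw [EuclideanSpace.norm_eq]
  apply Real.sqrt_le_iff.2
  refine ⟨Finset.sum_nonneg fun i _ => abs_nonneg _, ?_⟩
  simp only [Real.norm_eq_abs]
  exact Finset.sum_sq_le_sq_sum_of_nonneg fun i _ => abs_nonneg _

theorem tl_lip (X Y : Eucl m) (D : ℝ) (hD : ∀ i : Fin m, P.d ≤ (i:ℕ) → |X i - Y i| ≤ D) (hD0 : 0 ≤ D) :
    |P.tl X - P.tl Y| ≤ m * (2 * sK * D / P.v) := by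
  have hv := P.hv
  have hK := one_le_sK
  unfold tl
  rw [← Finset.sum_sub_distrib]
  refine (Finset.abs_sum_le_sum_abs _ _).trans ?_
  calc _ ≤ ∑ i : Fin m, (2 * sK * D / P.v) := by
        refine Finset.sum_le_sum fun i _ => ?_
        split_ifs with hi
        · simp; positivity
        · have h1 := sK_lip ((X i - P.B) / P.v) ((Y i - P.B) / P.v)
          have h2 := sK_lip ((-X i - P.B) / P.v) ((-Y i - P.B) / P.v)
          have e1 : (X i - P.B) / P.v - (Y i - P.B) / P.v = (X i - Y i) / P.v := by ring
          have e2 : (-X i - P.B) / P.v - (-Y i - P.B) / P.v = -((X i - Y i) / P.v) := by ring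
          rw [e1, abs_div, abs_of_pos hv] at h1
          rw [e2, abs_neg, abs_div, abs_of_pos hv] at h2
          have h3 : sK * (|X i - Y i| / P.v) ≤ sK * (D / P.v) := by
            have := hD i (by omega)
            gcongr
          have h4 : 2 * sK * D / P.v = sK * (D / P.v) + sK * (D / P.v) := by ring
          rw [h4]
          rw [add_sub_add_comm]
          exact (abs_add_le _ _).trans (add_le_add (h1.trans h3) (h2.trans h3))
    _ = _ := by simp

theorem f_mono_hE {X Y : Eucl m} (h : P.hE X ≤ P.hE Y) : P.f X ≤ P.f Y := by
  have := st_mono h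
  have := P.hδ1
  unfold f; nlinarith

theorem f_lip (X Y : Eucl m) : |P.f X - P.f Y| ≤ sK * |P.hE X - P.hE Y| := by
  have h1 := P.hδ1
  have h0 := P.hδ0
  have e : P.f X - P.f Y = (1 - P.δ) * (Real.smoothTransition (P.hE X) - Real.smoothTransition (P.hE Y)) := by
    unfold f; ring
  rw [e, abs_mul, abs_of_pos (by linarith)]
  have := sK_lip (P.hE X) (P.hE Y)
  have h3 := abs_nonneg (Real.smoothTransition (P.hE X) - Real.smoothTransition (P.hE Y))
  nlinarith

def Clow : ℝ := m * (2 * (m + 2 * m * P.n * sK ^ 2 * (P.L / P.v)) + 1)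

theorem lower (X Y : Eucl m) : P.kap X * ‖X - Y‖ ≤ P.Clow * ‖P.Psi X - P.Psi Y‖ := by
  obtain ⟨N, hN⟩ := exists_seminorm m P.d P.q P.hq P.hqe
  have hL := P.hL
  have hv := P.hv
  have hK := one_le_sK
  have hq0 : P.q ≠ 0 := by have := P.hq; omega
  have hNc : ∀ (X : Eucl m) (i : Fin m), (i:ℕ) < P.d → |X i| ≤ N X := by
    intro X i hi
    refine le_of_pow_le_pow_left₀ hq0 (apply_nonneg N X) ?_
    rw [hN, P.hqe.pow_abs]
    calc X i ^ P.q = if (i : ℕ) < P.d then (X i) ^ P.q else 0 := by rw [if_pos hi]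
      _ ≤ _ := Finset.single_le_sum (f := fun i : Fin m => if (i : ℕ) < P.d then (X i) ^ P.q else 0)
        (fun i _ => by dsimp only; split_ifs; exacts [P.hqe.pow_nonneg _, le_rfl]) (Finset.mem_univ i)
  have hNm : ∀ X : Eucl m, N X ≤ m * ‖X‖ := by
    intro X
    refine le_of_pow_le_pow_left₀ hq0 (by positivity) ?_
    rw [hN]
    calc _ ≤ ∑ i : Fin m, ‖X‖ ^ P.q := by
          refine Finset.sum_le_sum fun i _ => ?_
          split_ifs
          · rw [← P.hqe.pow_abs]; exact pow_le_pow_left₀ (abs_nonneg _) (coord_le X i) _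
          · positivity
      _ = m * ‖X‖ ^ P.q := by simp
      _ ≤ m ^ P.q * ‖X‖ ^ P.q := by
        gcongr
        rcases Nat.eq_zero_or_pos m with h | h
        · subst h; simp [hq0]
        · exact le_self_pow₀ (by exact_mod_cast h) hq0
      _ = _ := by rw [mul_pow]
  have hS : ∀ X, P.hS X = (N X / P.L) ^ P.q := by
    intro X
    rw [div_pow, hN, Finset.sum_div]
    refine Finset.sum_congr rfl fun i _ => ?_
    split_ifs
    · rw [div_pow]
    · simp
  have hNh : ∀ X Y : Eucl m, (∀ i : Fin m, (i:ℕ) < P.d → X i = Y i) → N X = N Y := by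
    intro X Y h
    refine (pow_left_inj₀ (apply_nonneg N X) (apply_nonneg N Y) hq0).1 ?_
    rw [hN, hN]
    refine Finset.sum_congr rfl fun i _ => ?_
    split_ifs with hi
    · rw [h i hi]
    · rfl
  set D := ‖P.Psi X - P.Psi Y‖ with hD
  have hD0 : 0 ≤ D := norm_nonneg _
  have htail : ∀ i : Fin m, P.d ≤ (i:ℕ) → |X i - Y i| ≤ D := by
    intro i hi
    have := coord_le (P.Psi X - P.Psi Y) i
    rwa [PiLp.sub_apply, P.Psi_tail _ _ hi, P.Psi_tail _ _ hi] at this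
  -- intermediate point
  set Z : Eucl m := P.hP Y + (X - P.hP X) with hZ
  have hZh : ∀ i : Fin m, (i:ℕ) < P.d → Z i = Y i := by intro i hi; simp [hZ, hi]
  have hZt : ∀ i : Fin m, P.d ≤ (i:ℕ) → Z i = X i := by intro i hi; simp [hZ, Nat.not_lt.2 hi]
  have hNZ : N Z = N Y := hNh _ _ hZh
  have htZ : P.tl Z = P.tl X := by
    refine Finset.sum_congr rfl fun i _ => ?_
    split_ifs with hi
    · rfl
    · rw [hZt i (by omega)]
  have hmono : ∀ A B : Eucl m, N A ≤ N B → P.tl A = P.tl B → P.kap A ≤ P.kap B := by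
    intro A B h1 h2
    refine pow_le_pow_left₀ (P.f_pos A).le (P.f_mono_hE ?_) _
    unfold hE
    rw [h2]
    refine add_le_add_left (st_mono ?_) _
    have h3 : 0 < 1 - P.a := by linarith [P.ha1]
    have h4 := apply_nonneg N A
    rw [hS, hS]
    gcongr
  have hdiff : |P.kap Z - P.kap Y| * N Y ≤ 2 * m * P.n * sK ^ 2 * (P.L / P.v) * D := by
    by_cases h : P.L ≤ N Y
    · have h1 : ∀ W, N W = N Y → P.kap W = 1 := by
        intro W hW
        unfold kap
        rw [P.f_one_of_hS W, one_pow]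
        rw [hS, hW]
        exact one_le_pow₀ ((one_le_div hL).2 h)
      rw [h1 Z hNZ, h1 Y rfl]; simp; positivity
    · push Not at h
      have h1 : |P.kap Z - P.kap Y| ≤ P.n * |P.f Z - P.f Y| := by
        have := abs_pow_sub_pow_le (P.f Z) (P.f Y) P.n
        refine this.trans ?_
        have h2 : max |P.f Z| |P.f Y| ^ (P.n - 1) ≤ 1 := by
          refine pow_le_one₀ (le_max_of_le_left (abs_nonneg _)) (max_le ?_ ?_)
          · rw [abs_of_pos (P.f_pos _)]; exact P.f_le _
          · rw [abs_of_pos (P.f_pos _)]; exact P.f_le _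
        have h3 : 0 ≤ |P.f Z - P.f Y| * P.n := by positivity
        calc _ ≤ |P.f Z - P.f Y| * P.n * 1 := by gcongr
          _ = _ := by ring
      have h2 : |P.hE Z - P.hE Y| ≤ m * (2 * sK * D / P.v) := by
        have : P.hE Z - P.hE Y = P.tl Z - P.tl Y := by
          unfold hE; rw [hS, hS, hNZ]; ring
        rw [this, htZ]
        exact P.tl_lip X Y D htail hD0
      have h3 := P.f_lip Z Y
      calc |P.kap Z - P.kap Y| * N Y ≤ (P.n * (sK * (m * (2 * sK * D / P.v)))) * P.L := by
            have := h3.trans (mul_le_mul_of_nonneg_left h2 (by linarith))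
            have hN0 := apply_nonneg N Y
            gcongr
            exact h1.trans (by gcongr)
        _ = _ := by field_simp
  have hmain : P.kap X * N (X - Y) ≤ 2 * (m + 2 * m * P.n * sK ^ 2 * (P.L / P.v)) * D := by
    have hk : N (P.kap X • X - P.kap Z • Y) ≤ m * D + 2 * m * P.n * sK ^ 2 * (P.L / P.v) * D := by
      have e1 : N (P.kap X • X - P.kap Z • Y) ≤ N (P.kap X • X - P.kap Y • Y) + |P.kap Z - P.kap Y| * N Y := by
        have : P.kap X • X - P.kap Z • Y = (P.kap X • X - P.kap Y • Y) - (P.kap Z - P.kap Y) • Y := by module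
        rw [this]
        refine (map_sub_le_add N _ _).trans ?_
        rw [map_smul_eq_mul, Real.norm_eq_abs]
      have e2 : N (P.kap X • X - P.kap Y • Y) = N (P.Psi X - P.Psi Y) := by
        refine hNh _ _ fun i hi => ?_
        rw [PiLp.sub_apply, PiLp.sub_apply, P.Psi_head _ _ hi, P.Psi_head _ _ hi]; rfl
      have e3 := hNm (P.Psi X - P.Psi Y)
      rw [← hD] at e3
      linarith
    have : P.kap X * N (X - Y) ≤ 2 * N (P.kap X • X - P.kap Z • Y) := by
      rcases le_total (N Y) (N X) with h | h
      · exact semi_key N Y X (P.kap Z) (P.kap X) h (P.kap_pos _).le (hmono _ _ (by rw [hNZ]; exact h) htZ)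
      · have h1 : P.kap X ≤ P.kap Z := hmono _ _ (by rw [hNZ]; exact h) htZ.symm
        have h2 := semi_key N X Y (P.kap X) (P.kap Z) h (P.kap_pos _).le h1
        rw [map_sub_rev N Y X, map_sub_rev N (P.kap Z • Y)] at h2
        exact (mul_le_mul_of_nonneg_right h1 (apply_nonneg _ _)).trans h2
    linarith
  have hD1 : 0 ≤ 2 * (m + 2 * m * P.n * sK ^ 2 * (P.L / P.v)) * D := by positivity
  calc P.kap X * ‖X - Y‖ ≤ P.kap X * ∑ i, |(X - Y) i| := by
        have := P.kap_pos X
        gcongr; exact norm_le_sum _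
    _ = ∑ i, P.kap X * |(X - Y) i| := Finset.mul_sum _ _ _
    _ ≤ ∑ i : Fin m, (2 * (m + 2 * m * P.n * sK ^ 2 * (P.L / P.v)) + 1) * D := by
        refine Finset.sum_le_sum fun i _ => ?_
        have hkp := P.kap_pos X
        by_cases hi : (i:ℕ) < P.d
        · have := mul_le_mul_of_nonneg_left (hNc (X - Y) i hi) hkp.le
          linarith
        · have h1 := htail i (by omega)
          have h2 := P.kap_le X
          rw [PiLp.sub_apply]
          have := abs_nonneg (X i - Y i)
          nlinarith
    _ = _ := by simp [Clow]; ring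

end Par
end ShrinkAux

namespace ShrinkAux
namespace Par
variable {m : ℕ} (P : Par m)

theorem st_deriv_zero {x : ℝ} (hx : 1 < x) : deriv Real.smoothTransition x = 0 := by
  have : Real.smoothTransition =ᶠ[nhds x] fun _ => 1 := by
    filter_upwards [Ioi_mem_nhds hx] with y hy
    exact Real.smoothTransition.one_of_one_le (le_of_lt hy)
  rw [this.deriv_eq]; simp

theorem st_hasDeriv (x : ℝ) : HasDerivAt Real.smoothTransition (deriv Real.smoothTransition x) x := by
  have hc : ContDiff ℝ 1 Real.smoothTransition := Real.smoothTransition.contDiff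
  exact (hc.differentiable (by norm_num) x).hasDerivAt

theorem st_deriv_nonneg (x : ℝ) : 0 ≤ deriv Real.smoothTransition x := st_mono.deriv_nonneg

theorem coord_contDiff (i : Fin m) : ContDiff ℝ (⊤ : ℕ∞) (fun X : Eucl m => X i) :=
  (EuclideanSpace.proj (𝕜 := ℝ) i).contDiff

theorem kap_contDiff : ContDiff ℝ (⊤ : ℕ∞) P.kap := by
  have h1 : ContDiff ℝ (⊤ : ℕ∞) P.hS := by
    unfold hS
    refine ContDiff.sum fun i _ => ?_
    by_cases hi : (i:ℕ) < P.d
    · simp only [hi, if_true]; exact ((coord_contDiff i).div_const _).pow _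
    · simp only [hi, if_false]; exact contDiff_const
  have h2 : ContDiff ℝ (⊤ : ℕ∞) P.tl := by
    unfold tl
    refine ContDiff.sum fun i _ => ?_
    by_cases hi : (i:ℕ) < P.d
    · simp only [hi, if_true]; exact contDiff_const
    · simp only [hi, if_false]
      exact (Real.smoothTransition.contDiff.comp (((coord_contDiff i).sub contDiff_const).div_const _)).add
        (Real.smoothTransition.contDiff.comp (((coord_contDiff i).neg.sub contDiff_const).div_const _))
  have h3 : ContDiff ℝ (⊤ : ℕ∞) P.hE :=
    (Real.smoothTransition.contDiff.comp ((h1.sub contDiff_const).div_const _)).add h2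
  exact (contDiff_const.add (contDiff_const.mul (Real.smoothTransition.contDiff.comp h3))).pow _

theorem Psi_contDiff : ContDiff ℝ (⊤ : ℕ∞) P.Psi :=
  contDiff_id.add ((P.kap_contDiff.sub contDiff_const).smul P.hP.contDiff)

def DPsi (X : Eucl m) : Eucl m →L[ℝ] Eucl m :=
  ContinuousLinearMap.id ℝ _ + ((P.kap X - 1) • P.hP + (fderiv ℝ P.kap X).smulRight (P.hP X))

theorem Psi_hasFDeriv (X : Eucl m) : HasFDerivAt P.Psi (P.DPsi X) X := by
  have hk : HasFDerivAt P.kap (fderiv ℝ P.kap X) X :=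
    (P.kap_contDiff.differentiable (by simp) X).hasFDerivAt
  exact (hasFDerivAt_id X).add ((hk.sub_const 1).smul P.hP.hasFDerivAt)

def val (X : Eucl m) : ℝ := fderiv ℝ P.kap X (P.hP X)

theorem val_eq (X : Eucl m) : P.val X = P.n * P.f X ^ (P.n - 1) * ((1 - P.δ) *
    (deriv Real.smoothTransition (P.hE X) * (deriv Real.smoothTransition ((P.hS X - P.a) / (1 - P.a)) *
      (P.q * P.hS X / (1 - P.a))))) := by
  have hk : HasFDerivAt P.kap (fderiv ℝ P.kap X) X :=
    (P.kap_contDiff.differentiable (by simp) X).hasFDerivAt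
  have hline : HasDerivAt (fun t : ℝ => X + t • P.hP X) (P.hP X) 0 := by
    simpa using ((hasDerivAt_id (0:ℝ)).smul_const (P.hP X)).const_add X
  have h1 : HasDerivAt (fun t : ℝ => P.kap (X + t • P.hP X)) (P.val X) 0 := by
    have : HasFDerivAt P.kap (fderiv ℝ P.kap X) (X + (0:ℝ) • P.hP X) := by simpa using hk
    exact this.comp_hasDerivAt 0 hline
  have e : (fun t : ℝ => P.kap (X + t • P.hP X)) = fun t : ℝ =>
      (P.δ + (1 - P.δ) * Real.smoothTransition
        (Real.smoothTransition (((1 + t) ^ P.q * P.hS X - P.a) / (1 - P.a)) + P.tl X)) ^ P.n := by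
    funext t
    have e1 : P.hS (X + t • P.hP X) = (1 + t) ^ P.q * P.hS X := by
      unfold hS
      rw [Finset.mul_sum]
      refine Finset.sum_congr rfl fun i _ => ?_
      split_ifs with hi
      · rw [← mul_pow]; congr 1
        simp [hi]; ring
      · simp
    have e2 : P.tl (X + t • P.hP X) = P.tl X := by
      refine Finset.sum_congr rfl fun i _ => ?_
      split_ifs with hi
      · rfl
      · simp [hi]
    unfold kap f hE
    rw [e1, e2]
  rw [e] at h1
  have hp : HasDerivAt (fun t : ℝ => (1 + t) ^ P.q) (P.q : ℝ) 0 := by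
    have := ((hasDerivAt_id (0:ℝ)).const_add 1).fun_pow P.q
    simpa using this
  have hin : HasDerivAt (fun t : ℝ => ((1 + t) ^ P.q * P.hS X - P.a) / (1 - P.a))
      (P.q * P.hS X / (1 - P.a)) 0 := ((hp.mul_const _).sub_const _).div_const _
  have hs1 := (st_hasDeriv (((1 + 0) ^ P.q * P.hS X - P.a) / (1 - P.a))).comp (0:ℝ) hin
  have hs2 := (st_hasDeriv ((Real.smoothTransition (((1 + 0) ^ P.q * P.hS X - P.a) / (1 - P.a)) + P.tl X))).comp (0:ℝ)
    (hs1.add_const (P.tl X))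
  have h3 := (((hs2.const_mul (1 - P.δ)).const_add P.δ).pow P.n)
  have := h1.unique h3
  rw [this]
  simp only [add_zero, one_pow, one_mul, Function.comp]
  rfl

theorem hS_nonneg (X : Eucl m) : 0 ≤ P.hS X := Finset.sum_nonneg fun i _ => P.hS_term_nonneg X i

theorem val_nonneg (X : Eucl m) : 0 ≤ P.val X := by
  rw [val_eq]
  have h1 : 0 < 1 - P.a := by linarith [P.ha1]
  have h2 : 0 < 1 - P.δ := by linarith [P.hδ1]
  have h3 := P.f_pos X
  have h4 := st_deriv_nonneg (P.hE X)
  have h5 := st_deriv_nonneg ((P.hS X - P.a) / (1 - P.a))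
  have h6 := P.hS_nonneg X
  positivity

theorem val_le (X : Eucl m) : P.val X ≤ (P.n * sK ^ 2 * P.q / (1 - P.a)) * P.f X ^ (P.n - 1) := by
  rw [val_eq]
  have h1 : 0 < 1 - P.a := by linarith [P.ha1]
  have h2 : 0 < 1 - P.δ := by linarith [P.hδ1]
  have h2' : 1 - P.δ ≤ 1 := by linarith [P.hδ0]
  have h3 := P.f_pos X
  have h4 := st_deriv_nonneg (P.hE X)
  have h4' := sK_deriv (P.hE X)
  have h5 := st_deriv_nonneg ((P.hS X - P.a) / (1 - P.a))
  have h5' := sK_deriv ((P.hS X - P.a) / (1 - P.a))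
  have h6 := P.hS_nonneg X
  have hK := one_le_sK
  have key : deriv Real.smoothTransition ((P.hS X - P.a) / (1 - P.a)) * (P.q * P.hS X / (1 - P.a)) ≤
      sK * (P.q / (1 - P.a)) := by
    rcases le_or_gt (P.hS X) 1 with h | h
    · gcongr
      exact mul_le_of_le_one_right (by positivity) h
    · rw [st_deriv_zero ((one_lt_div h1).2 (by linarith)), zero_mul]; positivity
  calc _ ≤ P.n * P.f X ^ (P.n - 1) * (1 * (sK * (sK * (P.q / (1 - P.a))))) := by gcongr
    _ = _ := by ring

theorem DPsi_eq (X : Eucl m) : (P.DPsi X : Eucl m →ₗ[ℝ] Eucl m) =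
    (LinearMap.id + (P.kap X - 1) • (P.hP : Eucl m →ₗ[ℝ] Eucl m)) ∘ₗ
      LinearMap.transvection (fderiv ℝ P.kap X : Eucl m →ₗ[ℝ] ℝ) ((P.kap X)⁻¹ • P.hP X) := by
  have hk := (P.kap_pos X).ne'
  ext Y i
  by_cases hi : (i:ℕ) < P.d
  · simp [DPsi, LinearMap.transvection.apply, hi]
    field_simp
    ring
  · simp [DPsi, LinearMap.transvection.apply, hi]

theorem det_diag (k : ℝ) : LinearMap.det (LinearMap.id + (k - 1) • (P.hP : Eucl m →ₗ[ℝ] Eucl m)) = k ^ P.d := by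
  have : LinearMap.toMatrix (EuclideanSpace.basisFun (Fin m) ℝ).toBasis (EuclideanSpace.basisFun (Fin m) ℝ).toBasis
      (LinearMap.id + (k - 1) • (P.hP : Eucl m →ₗ[ℝ] Eucl m)) =
      Matrix.diagonal (fun i : Fin m => if (i:ℕ) < P.d then k else 1) := by
    ext i j
    rw [LinearMap.toMatrix_apply]
    by_cases hij : i = j
    · subst hij
      by_cases hi : (i:ℕ) < P.d <;> simp [hi]
    · by_cases hi : (i:ℕ) < P.d <;> simp [hi, hij, Matrix.diagonal]
  rw [← LinearMap.det_toMatrix (EuclideanSpace.basisFun (Fin m) ℝ).toBasis, this, Matrix.det_diagonal,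
    Finset.prod_ite]
  simp [Fin.card_filter_val_lt, P.hdm]

theorem det_eq (X : Eucl m) : (P.DPsi X).det = P.kap X ^ P.d * (1 + (P.kap X)⁻¹ * P.val X) := by
  have : (P.DPsi X).det = LinearMap.det (P.DPsi X : Eucl m →ₗ[ℝ] Eucl m) := rfl
  rw [this, DPsi_eq, LinearMap.det_comp, det_diag, LinearMap.transvection.det]
  simp [val]

theorem det_pos (X : Eucl m) : 0 < (P.DPsi X).det := by
  rw [det_eq]
  have := P.kap_pos X
  have := P.val_nonneg X
  positivity

def C1 : ℝ := 1 + P.n * sK ^ 2 * P.q / (1 - P.a)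

theorem C1_ge : 1 ≤ P.C1 := by
  have h1 : 0 < 1 - P.a := by linarith [P.ha1]
  have hK := one_le_sK
  unfold C1
  have : 0 ≤ P.n * sK ^ 2 * P.q / (1 - P.a) := by positivity
  linarith

theorem det_le (X : Eucl m) : (P.DPsi X).det ≤ P.C1 * P.f X ^ (P.n * P.d - 1) := by
  rw [det_eq]
  have hk := P.kap_pos X
  have hf := P.f_pos X
  have hf1 := P.f_le X
  have hv := P.val_le X
  have h1 : 0 < 1 - P.a := by linarith [P.ha1]
  have hK := one_le_sK
  obtain ⟨n', hn⟩ : ∃ n', P.n = n' + 1 := ⟨P.n - 1, by have := P.hn; omega⟩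
  obtain ⟨d', hd⟩ : ∃ d', P.d = d' + 1 := ⟨P.d - 1, by have := P.hd1; omega⟩
  have e1 : P.n * P.d - 1 = n' + P.n * d' := by rw [hn, hd]; ring_nf; omega
  have e2 : P.kap X ^ P.d * (1 + (P.kap X)⁻¹ * P.val X) = P.kap X ^ d' * (P.kap X + P.val X) := by
    rw [hd, pow_succ]; field_simp
  rw [e2, e1, pow_add, pow_mul]
  have e3 : P.kap X ≤ P.f X ^ n' := by
    unfold kap; exact pow_le_pow_of_le_one hf.le hf1 (by omega)
  have e4 : P.n - 1 = n' := by omega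
  rw [e4] at hv
  calc P.kap X ^ d' * (P.kap X + P.val X) ≤ P.kap X ^ d' * (P.C1 * P.f X ^ n') := by
        gcongr
        unfold C1; linarith
    _ = _ := by unfold kap; ring

end Par
end ShrinkAux

namespace ShrinkAux
namespace Par
variable {m : ℕ} (P : Par m)

theorem Clow_pos : 0 < P.Clow := by
  have hm : 0 < m := P.hd1.trans P.hdm
  have := one_le_sK
  have := P.hL
  have := P.hv
  unfold Clow
  positivity

theorem Psi_inj : Function.Injective P.Psi := by
  intro X Y h
  have h1 := P.lower X Y
  rw [h, sub_self, norm_zero, mul_zero] at h1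
  have h2 := P.kap_pos X
  have h3 : ‖X - Y‖ ≤ 0 := by
    by_contra hh
    push Not at hh
    nlinarith [mul_pos h2 hh]
  exact sub_eq_zero.1 (norm_le_zero_iff.1 h3)

theorem Psi_surj : Function.Surjective P.Psi := by
  intro Y
  have hδ := pow_pos P.hδ0 P.n
  let X : ℝ → Eucl m := fun t => Y + (t - 1) • P.hP Y
  have hX : Continuous X := by fun_prop
  have hc : Continuous (fun t => t * P.kap (X t)) :=
    continuous_id.mul (P.kap_contDiff.continuous.comp hX)
  have h1 : (1:ℝ) ∈ Icc ((0:ℝ) * P.kap (X 0)) ((1 / P.δ ^ P.n) * P.kap (X (1 / P.δ ^ P.n))) := by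
    constructor
    · simp
    · rw [div_mul_eq_mul_div, one_mul, one_le_div hδ]; exact P.le_kap _
  obtain ⟨t, -, ht⟩ := intermediate_value_Icc (by positivity : (0:ℝ) ≤ 1 / P.δ ^ P.n) hc.continuousOn h1
  refine ⟨X t, ?_⟩
  ext i
  by_cases hi : (i:ℕ) < P.d
  · rw [P.Psi_head _ _ hi]
    have : X t i = t * Y i := by simp [X, hi]; ring
    rw [this]
    dsimp only at ht
    linear_combination (Y i) * ht
  · rw [P.Psi_tail _ _ (by omega)]
    simp [X, hi]

theorem Psi_antilip : ∃ K : NNReal, AntilipschitzWith K P.Psi := by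
  have hδ := pow_pos P.hδ0 P.n
  have hC := P.Clow_pos
  refine ⟨⟨P.Clow / P.δ ^ P.n, by positivity⟩, AntilipschitzWith.of_le_mul_dist fun X Y => ?_⟩
  rw [dist_eq_norm, dist_eq_norm]
  change _ ≤ P.Clow / P.δ ^ P.n * _
  rw [div_mul_eq_mul_div, le_div_iff₀ hδ, mul_comm]
  exact (mul_le_mul_of_nonneg_right (P.le_kap X) (norm_nonneg _)).trans (P.lower X Y)

def eqv : Eucl m ≃ Eucl m := Equiv.ofBijective P.Psi ⟨P.Psi_inj, P.Psi_surj⟩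

def homeo : Eucl m ≃ₜ Eucl m where
  toEquiv := P.eqv
  continuous_toFun := P.Psi_contDiff.continuous
  continuous_invFun := by
    obtain ⟨K, hK⟩ := P.Psi_antilip
    exact (hK.to_rightInverse P.eqv.right_inv).continuous

def Phi (x : Eucl m) : Eucl m := P.homeo.symm x

theorem Psi_Phi (x : Eucl m) : P.Psi (P.Phi x) = x := P.homeo.apply_symm_apply x
theorem Phi_Psi (x : Eucl m) : P.Phi (P.Psi x) = x := P.homeo.symm_apply_apply x

theorem Phi_contDiff : ContDiff ℝ (⊤ : ℕ∞) P.Phi := by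
  refine P.homeo.contDiff_symm
    (f₀' := fun X => (P.DPsi X).toContinuousLinearEquivOfDetNeZero (P.det_pos X).ne') ?_ P.Psi_contDiff
  intro X
  exact P.Psi_hasFDeriv X

theorem Phi_inj : Function.Injective P.Phi := P.homeo.symm.injective

theorem Phi_preimage (ω : Set (Eucl m)) : P.Phi ⁻¹' ω = P.Psi '' ω := by
  ext x
  constructor
  · intro h; exact ⟨_, h, P.Psi_Phi x⟩
  · rintro ⟨y, hy, rfl⟩; simpa [P.Phi_Psi] using hy

theorem Phi_out (x : Eucl m) (h : x ∉ rect m P.d P.L (P.B + P.v)) : P.Phi x = x := by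
  have := P.Phi_Psi x
  rwa [P.Psi_out x h] at this

theorem Phi_coord (x : Eucl m) (i : Fin m) :
    ((i:ℕ) < P.d → P.Phi x i = (P.kap (P.Phi x))⁻¹ * x i) ∧ (P.d ≤ (i:ℕ) → P.Phi x i = x i) := by
  constructor
  · intro hi
    have := P.Psi_head (P.Phi x) i hi
    rw [P.Psi_Phi] at this
    rw [this, inv_mul_cancel_left₀ (P.kap_pos _).ne']
  · intro hi
    have := P.Psi_tail (P.Phi x) i hi
    rw [P.Psi_Phi] at this
    exact this.symm

theorem rect_sub_image (τ : ℝ) (hτ : m * P.δ * P.ρ < τ) :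
    rect m P.d (P.ρ * P.L) P.B ⊆ P.Phi '' cylinder m P.d (τ * P.L) P.B := by
  intro X hX
  refine ⟨P.Psi X, ⟨?_, fun i hi => ?_⟩, P.Phi_Psi X⟩
  · have hL := P.hL
    have hδ := P.hδ0
    have hρ := P.hρ0
    refine lt_of_le_of_lt ?_ (mul_lt_mul_of_pos_right hτ hL)
    unfold headNorm
    apply Real.sqrt_le_iff.2
    refine ⟨by positivity, ?_⟩
    have hk : P.kap X ≤ P.δ := by
      unfold kap; rw [P.f_eq_in X hX]
      exact pow_le_of_le_one hδ.le P.hδ1.le (by have := P.hn; omega)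
    calc _ ≤ ∑ i : Fin m, (P.δ * P.ρ * P.L) ^ 2 := by
          refine Finset.sum_le_sum fun i _ => ?_
          split_ifs with hi
          · rw [P.Psi_head _ _ hi, ← sq_abs, abs_mul, abs_of_pos (P.kap_pos X)]
            have := ((hX i).1 hi).le
            have := P.kap_pos X
            rw [mul_assoc]
            gcongr
          · positivity
      _ = m * (P.δ * P.ρ * P.L) ^ 2 := by simp
      _ ≤ m ^ 2 * (P.δ * P.ρ * P.L) ^ 2 := by
        gcongr
        have hm : 1 ≤ m := P.hd1.trans P.hdm
        exact_mod_cast Nat.le_self_pow (by norm_num) m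
      _ = _ := by ring
  · rw [P.Psi_tail _ _ hi]; exact (hX i).2 hi

theorem cov (ω : Set (Eucl m)) (hω : MeasurableSet ω) (g : Eucl m → ℝ≥0∞) :
    ∫⁻ x in P.Phi ⁻¹' ω, g x = ∫⁻ X in ω, ENNReal.ofReal (P.DPsi X).det * g (P.Psi X) := by
  rw [Phi_preimage, lintegral_image_eq_lintegral_abs_det_fderiv_mul volume hω
    (fun X _ => (P.Psi_hasFDeriv X).hasFDerivWithinAt) P.Psi_inj.injOn]
  simp only [abs_of_pos (P.det_pos _)]

end Par
end ShrinkAux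

namespace ShrinkAux
namespace Par
variable {m : ℕ} (P : Par m)

theorem jac_prod_real (X Y : Eucl m) (w β : ℝ) (hw : P.f X ≤ w ∨ P.f Y ≤ w) (hnd : 2 ≤ P.n * P.d)
    (hβ : P.n * β ≤ 2 * (P.n * P.d : ℕ) - 3) :
    (P.DPsi X).det * (P.DPsi Y).det ≤ P.C1 ^ 2 * w * (max (P.f X) (P.f Y) ^ P.n) ^ β := by
  have key : ∀ x y : ℝ, 0 < x → x ≤ y → y ≤ 1 → x ≤ w →
      x ^ (P.n * P.d - 1) * y ^ (P.n * P.d - 1) ≤ w * (y ^ P.n) ^ β := by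
    intro x y hx hxy hy hxw
    have hy0 : 0 < y := hx.trans_le hxy
    obtain ⟨k, hk⟩ : ∃ k, P.n * P.d = k + 2 := ⟨P.n * P.d - 2, by omega⟩
    have e1 : P.n * P.d - 1 = k + 1 := by omega
    rw [e1]
    have h1 : x ^ (k + 1) ≤ w * y ^ k := by
      rw [pow_succ, mul_comm]
      exact mul_le_mul hxw (pow_le_pow_left₀ hx.le hxy _) (by positivity) (hx.le.trans hxw)
    have h2 : y ^ (2 * k + 1) ≤ (y ^ P.n) ^ β := by
      rw [← Real.rpow_natCast y P.n, ← Real.rpow_mul hy0.le, ← Real.rpow_natCast y (2 * k + 1)]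
      refine Real.rpow_le_rpow_of_exponent_ge hy0 hy ?_
      rw [hk] at hβ
      push_cast at hβ ⊢
      linarith
    calc x ^ (k+1) * y ^ (k+1) ≤ (w * y ^ k) * y ^ (k+1) := by gcongr
      _ = w * y ^ (2 * k + 1) := by ring
      _ ≤ _ := by
        have : 0 ≤ w := hx.le.trans hxw
        gcongr
  have hX := P.det_le X
  have hY := P.det_le Y
  have hC := P.C1_ge
  have hfx := P.f_pos X
  have hfy := P.f_pos Y
  have hm : P.f X ^ (P.n * P.d - 1) * P.f Y ^ (P.n * P.d - 1) ≤ w * (max (P.f X) (P.f Y) ^ P.n) ^ β := by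
    rcases le_total (P.f X) (P.f Y) with h | h
    · rw [max_eq_right h]
      exact key _ _ hfx h (P.f_le Y) (hw.elim id (fun h' => h.trans h'))
    · rw [max_eq_left h, mul_comm]
      exact key _ _ hfy h (P.f_le X) (hw.elim (fun h' => h.trans h') id)
  calc (P.DPsi X).det * (P.DPsi Y).det
      ≤ (P.C1 * P.f X ^ (P.n * P.d - 1)) * (P.C1 * P.f Y ^ (P.n * P.d - 1)) := by
        have := P.det_pos Y
        gcongr
    _ = P.C1 ^ 2 * (P.f X ^ (P.n * P.d - 1) * P.f Y ^ (P.n * P.d - 1)) := by ring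
    _ ≤ P.C1 ^ 2 * (w * (max (P.f X) (P.f Y) ^ P.n) ^ β) := by gcongr
    _ = _ := by ring

theorem lower_max (X Y : Eucl m) :
    max (P.f X) (P.f Y) ^ P.n * ‖X - Y‖ ≤ P.Clow * ‖P.Psi X - P.Psi Y‖ := by
  rcases le_total (P.f X) (P.f Y) with h | h
  · rw [max_eq_right h]
    have := P.lower Y X
    rwa [norm_sub_rev Y X, norm_sub_rev (P.Psi Y)] at this
  · rw [max_eq_left h]; exact P.lower X Y

def C2 (β : ℝ) : ℝ := P.C1 ^ 2 * P.Clow ^ β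

theorem kernel (X Y : Eucl m) (hXY : X ≠ Y) (w β θ : ℝ) (g : Fin m → ℝ)
    (hw : P.f X ≤ w ∨ P.f Y ≤ w) (hnd : 2 ≤ P.n * P.d)
    (hβ : P.n * β ≤ 2 * (P.n * P.d : ℕ) - 3) (hβ0 : 0 < β)
    (hg0 : ∀ i, 0 ≤ g i) (hg : ∀ i : Fin m, (i:ℕ) < P.d → g i = 0) (hθ : β + ∑ i, g i = θ) :
    ENNReal.ofReal ((P.DPsi X).det * (P.DPsi Y).det) * ‖P.Psi X - P.Psi Y‖ₑ ^ (-θ) ≤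
      ENNReal.ofReal (P.C2 β * w) * Wk β g (X - Y) := by
  have hD0 : ‖P.Psi X - P.Psi Y‖ₑ ≠ 0 := by
    rw [Ne, enorm_eq_zero, sub_eq_zero]
    exact fun h => hXY (P.Psi_inj h)
  have hDt : ‖P.Psi X - P.Psi Y‖ₑ ≠ ⊤ := enorm_ne_top
  set D := ‖P.Psi X - P.Psi Y‖ₑ with hD
  set F := max (P.f X) (P.f Y) ^ P.n with hF
  have hF0 : 0 < F := pow_pos (lt_max_of_lt_left (P.f_pos X)) _
  have hC := P.Clow_pos
  have hC1 := P.C1_ge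
  have hw0 : 0 < w := hw.elim (fun h => (P.f_pos X).trans_le h) (fun h => (P.f_pos Y).trans_le h)
  have e1 : D ^ (-θ) = D ^ (-β) * ∏ i, D ^ (-(g i)) := by
    have hs : D ^ (-∑ i, g i) = ∏ i, D ^ (-(g i)) := by
      rw [← Finset.sum_neg_distrib]
      generalize (Finset.univ : Finset (Fin m)) = S
      induction S using Finset.cons_induction with
      | empty => simp
      | cons a S ha ih => rw [Finset.sum_cons, Finset.prod_cons, ENNReal.rpow_add _ _ hD0 hDt, ih]
    rw [← hs, ← ENNReal.rpow_add _ _ hD0 hDt, ← hθ]; congr 1; ring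
  have e2 : ∏ i, D ^ (-(g i)) ≤ ∏ i, ‖(X - Y) i‖ₑ ^ (-(g i)) := by
    refine Finset.prod_le_prod' fun i _ => ?_
    by_cases hi : (i:ℕ) < P.d
    · simp [hg i hi]
    · refine rpow_anti ?_ (hg0 i)
      have : (X - Y) i = (P.Psi X - P.Psi Y) i := by
        rw [PiLp.sub_apply, PiLp.sub_apply, P.Psi_tail _ _ (by omega), P.Psi_tail _ _ (by omega)]
      rw [this, hD]
      exact enorm_le_iff_norm_le.2 (PiLp.norm_apply_le _ i)
  have e3 : D ^ (-β) ≤ ENNReal.ofReal ((P.Clow / F) ^ β) * ‖X - Y‖ₑ ^ (-β) := by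
    have h1 : ‖X - Y‖ₑ ≤ ENNReal.ofReal (P.Clow / F) * D := by
      rw [hD, ← ofReal_norm, ← ofReal_norm, ← ENNReal.ofReal_mul (by positivity)]
      refine ENNReal.ofReal_le_ofReal ?_
      rw [div_mul_eq_mul_div, le_div_iff₀ hF0, mul_comm]
      exact P.lower_max X Y
    have h2 := rpow_anti h1 hβ0.le
    rw [ENNReal.mul_rpow_of_ne_top ENNReal.ofReal_ne_top hDt] at h2
    have h3 : ENNReal.ofReal ((P.Clow / F) ^ β) * ENNReal.ofReal (P.Clow / F) ^ (-β) = 1 := by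
      rw [ENNReal.ofReal_rpow_of_pos (by positivity), ← ENNReal.ofReal_mul (by positivity),
        ← Real.rpow_add (by positivity)]; simp
    calc D ^ (-β) = ENNReal.ofReal ((P.Clow / F) ^ β) * (ENNReal.ofReal (P.Clow / F) ^ (-β) * D ^ (-β)) := by
          rw [← mul_assoc, h3, one_mul]
      _ ≤ _ := by gcongr
  have e4 : ENNReal.ofReal ((P.DPsi X).det * (P.DPsi Y).det) * ENNReal.ofReal ((P.Clow / F) ^ β)
      ≤ ENNReal.ofReal (P.C2 β * w) := by
    rw [← ENNReal.ofReal_mul (mul_nonneg (P.det_pos X).le (P.det_pos Y).le)]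
    refine ENNReal.ofReal_le_ofReal ?_
    have h := P.jac_prod_real X Y w β hw hnd hβ
    rw [← hF] at h
    calc _ ≤ (P.C1 ^ 2 * w * F ^ β) * (P.Clow / F) ^ β := by gcongr
      _ = _ := by
        rw [Real.div_rpow hC.le hF0.le]
        have : F ^ β ≠ 0 := (Real.rpow_pos_of_pos hF0 _).ne'
        unfold C2; field_simp
  unfold Wk
  rw [e1]
  calc _ ≤ ENNReal.ofReal ((P.DPsi X).det * (P.DPsi Y).det) *
        ((ENNReal.ofReal ((P.Clow / F) ^ β) * ‖X - Y‖ₑ ^ (-β)) * ∏ i, ‖(X - Y) i‖ₑ ^ (-(g i))) := by gcongr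
    _ = (ENNReal.ofReal ((P.DPsi X).det * (P.DPsi Y).det) * ENNReal.ofReal ((P.Clow / F) ^ β)) *
        (‖X - Y‖ₑ ^ (-β) * ∏ i, ‖(X - Y) i‖ₑ ^ (-(g i))) := by ring
    _ ≤ _ := by gcongr

/-- the pulled back integrand -/
def kk {ν : ℕ} (p θ : ℝ) (u : Eucl m → Eucl ν) (X Y : Eucl m) : ℝ≥0∞ :=
  ENNReal.ofReal (P.DPsi X).det * (ENNReal.ofReal (P.DPsi Y).det *
    (‖u X - u Y‖ₑ ^ p / ‖P.Psi X - P.Psi Y‖ₑ ^ θ))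

theorem kk_le {ν : ℕ} (p θ : ℝ) (hp : 1 ≤ p) (u : Eucl m → Eucl ν) (X Y : Eucl m) (w β : ℝ) (g : Fin m → ℝ)
    (hw : P.f X ≤ w ∨ P.f Y ≤ w) (hnd : 2 ≤ P.n * P.d)
    (hβ : P.n * β ≤ 2 * (P.n * P.d : ℕ) - 3) (hβ0 : 0 < β)
    (hg0 : ∀ i, 0 ≤ g i) (hg : ∀ i : Fin m, (i:ℕ) < P.d → g i = 0) (hθ : β + ∑ i, g i = θ) :
    P.kk p θ u X Y ≤ ENNReal.ofReal (P.C2 β * w) * (‖u X - u Y‖ₑ ^ p * Wk β g (X - Y)) := by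
  unfold kk
  rcases eq_or_ne X Y with h | h
  · subst h
    simp [ENNReal.zero_rpow_of_pos (by linarith : 0 < p)]
  · have := P.kernel X Y h w β θ g hw hnd hβ hβ0 hg0 hg hθ
    rw [ENNReal.div_eq_inv_mul, ← ENNReal.rpow_neg]
    calc _ = (ENNReal.ofReal ((P.DPsi X).det * (P.DPsi Y).det) * ‖P.Psi X - P.Psi Y‖ₑ ^ (-θ)) * ‖u X - u Y‖ₑ ^ p := by
          rw [ENNReal.ofReal_mul (P.det_pos X).le]; ring
      _ ≤ (ENNReal.ofReal (P.C2 β * w) * Wk β g (X - Y)) * ‖u X - u Y‖ₑ ^ p := by gcongr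
      _ = _ := by ring

theorem gagl_cov {ν : ℕ} (s p : ℝ) (u : Eucl m → Eucl ν) (ω : Set (Eucl m)) (hω : MeasurableSet ω) :
    gagliardoPow m s p (P.Phi ⁻¹' ω) (fun x => u (P.Phi x)) =
      ∫⁻ X in ω, ∫⁻ Y in ω, P.kk p (m + s * p) u X Y := by
  unfold gagliardoPow
  rw [P.cov ω hω]
  refine lintegral_congr fun X => ?_
  rw [P.cov ω hω, ← lintegral_const_mul' _ _ ENNReal.ofReal_ne_top]
  refine lintegral_congr fun Y => ?_
  beta_reduce
  rw [P.Phi_Psi, P.Phi_Psi]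
  rfl

end Par
end ShrinkAux

namespace ShrinkAux

theorem W_meas {m ν : ℕ} (p β : ℝ) (g : Fin m → ℝ) (u : Eucl m → Eucl ν) (hu : Measurable u) :
    Measurable (fun z : Eucl m × Eucl m => ‖u z.1 - u z.2‖ₑ ^ p * Wk β g (z.1 - z.2)) := by
  have h1 : Measurable (fun z : Eucl m × Eucl m => u z.1 - u z.2) :=
    (hu.comp measurable_fst).sub (hu.comp measurable_snd)
  have h2 : Measurable (fun z : Eucl m × Eucl m => z.1 - z.2) := measurable_fst.sub measurable_snd
  exact (h1.enorm.pow_const p).mul ((Wk_meas β g).comp h2)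

theorem W_swap {m ν : ℕ} (p β : ℝ) (g : Fin m → ℝ) (u : Eucl m → Eucl ν) (hu : Measurable u)
    (E G : Set (Eucl m)) :
    ∫⁻ X in E, ∫⁻ Y in G, ‖u X - u Y‖ₑ ^ p * Wk β g (X - Y) =
    ∫⁻ X in G, ∫⁻ Y in E, ‖u X - u Y‖ₑ ^ p * Wk β g (X - Y) := by
  have := lintegral_lintegral_swap (μ := volume.restrict E) (ν := volume.restrict G)
    (f := fun X Y => ‖u X - u Y‖ₑ ^ p * Wk β g (X - Y)) (W_meas p β g u hu).aemeasurable
  rw [this]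
  refine lintegral_congr fun Y => lintegral_congr fun X => ?_
  rw [← Wk_neg β g (X - Y), neg_sub, ← enorm_neg (u X - u Y), neg_sub]

/-- Splitting the double integral. -/
theorem split4 {m : ℕ} (k W : Eucl m → Eucl m → ℝ≥0∞) (hW : Measurable (fun z : Eucl m × Eucl m => W z.1 z.2))
    (E Q : Set (Eucl m)) (hE : MeasurableSet E) (hQ : MeasurableSet Q) (A Aδ : ℝ≥0∞)
    (hA : A ≠ ⊤) (hAδ : Aδ ≠ ⊤)
    (h1 : ∀ X Y, k X Y ≤ A * W X Y) (h2 : ∀ X Y, X ∈ Q ∨ Y ∈ Q → k X Y ≤ Aδ * W X Y) :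
    ∫⁻ X in E ∪ Q, ∫⁻ Y in E ∪ Q, k X Y ≤
      A * (∫⁻ X in E, ∫⁻ Y in E, W X Y) + Aδ * (∫⁻ X in E, ∫⁻ Y in Q, W X Y) +
      Aδ * (∫⁻ X in Q, ∫⁻ Y in E, W X Y) + Aδ * (∫⁻ X in Q, ∫⁻ Y in Q, W X Y) := by
  have hmE : Measurable (fun X => ∫⁻ Y in E, W X Y) := hW.lintegral_prod_right'
  have hmQ : Measurable (fun X => ∫⁻ Y in Q, W X Y) := hW.lintegral_prod_right'
  refine (lintegral_union_le _ _ _).trans ?_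
  have a1 : ∫⁻ X in E, ∫⁻ Y in E ∪ Q, k X Y ≤
      A * (∫⁻ X in E, ∫⁻ Y in E, W X Y) + Aδ * (∫⁻ X in E, ∫⁻ Y in Q, W X Y) := by
    rw [← lintegral_const_mul' _ _ hA, ← lintegral_const_mul' _ _ hAδ,
      ← lintegral_add_left (hmE.const_mul A)]
    refine lintegral_mono fun X => (lintegral_union_le _ _ _).trans ?_
    rw [← lintegral_const_mul' _ _ hA, ← lintegral_const_mul' _ _ hAδ]
    exact add_le_add (lintegral_mono fun Y => h1 X Y) (setLIntegral_mono' hQ fun Y hY => h2 X Y (Or.inr hY))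
  have a2 : ∫⁻ X in Q, ∫⁻ Y in E ∪ Q, k X Y ≤
      Aδ * (∫⁻ X in Q, ∫⁻ Y in E, W X Y) + Aδ * (∫⁻ X in Q, ∫⁻ Y in Q, W X Y) := by
    rw [← lintegral_const_mul' _ _ hAδ, ← lintegral_const_mul' _ _ hAδ,
      ← lintegral_add_left (hmE.const_mul Aδ)]
    refine setLIntegral_mono' hQ fun X hX => (lintegral_union_le _ _ _).trans ?_
    rw [← lintegral_const_mul' _ _ hAδ, ← lintegral_const_mul' _ _ hAδ]
    exact add_le_add (lintegral_mono fun Y => h2 X Y (Or.inl hX)) (lintegral_mono fun Y => h2 X Y (Or.inl hX))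
  refine (add_le_add a1 a2).trans (le_of_eq ?_)
  ring

theorem gagl_mono {m ν : ℕ} (s p : ℝ) (u : Eucl m → Eucl ν) {A B S : Set (Eucl m)} (hA : A ⊆ S) (hB : B ⊆ S) :
    ∫⁻ X in A, ∫⁻ Y in B, ‖u X - u Y‖ₑ ^ p / ‖X - Y‖ₑ ^ ((m:ℝ) + s * p) ≤ gagliardoPow m s p S u :=
  (lintegral_mono fun _ => lintegral_mono_set hB).trans (lintegral_mono_set hA)

namespace Par
variable {m : ℕ} (P : Par m)

theorem main_gagl {ν : ℕ} (s p β K c' cb T : ℝ) (hp : 1 ≤ p) (g : Fin m → ℝ) (u : Eucl m → Eucl ν) (hu : Measurable u)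
    (hnd : 2 ≤ P.n * P.d) (hβ : P.n * β ≤ 2 * (P.n * P.d : ℕ) - 3) (hβ0 : 0 < β)
    (hg0 : ∀ i, 0 ≤ g i) (hg : ∀ i : Fin m, (i:ℕ) < P.d → g i = 0) (hθ : β + ∑ i, g i = m + s * p)
    (hK : ∀ ρ : ℝ, 0 < ρ → ∫⁻ H in {H : Eucl m | ρ ≤ ‖H‖}, Wk (β + m) g H
        ≤ ENNReal.ofReal K * ENNReal.ofReal ρ ^ (-((m:ℝ) + s * p))) (hK0 : 0 < K)
    (hc' : 0 < c') (hcb : 0 < cb) (hT1 : P.δ ≤ T) (hT2 : P.δ ≤ T * cb)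
    (ω Q : Set (Eucl m)) (hω : MeasurableSet ω) (hQm : MeasurableSet Q) (hQω : Q ⊆ ω)
    (hQf : ∀ X ∈ Q, P.f X = P.δ)
    (hregE : ∀ X ∈ ω \ Q, ∀ Y ∈ ω, X ≠ Y → ENNReal.ofReal (c' * (‖X - Y‖ / 2) ^ m) ≤
      volume (ball X (‖X - Y‖ / 2) ∩ (ω \ Q)))
    (hregQ : ∀ X ∈ Q, ∀ Y ∈ Q, X ≠ Y → ENNReal.ofReal (cb * (‖X - Y‖ / 2) ^ m) ≤
      volume (ball X (‖X - Y‖ / 2) ∩ Q)) :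
    gagliardoPow m s p (P.Phi ⁻¹' ω) (fun x => u (P.Phi x)) ≤
      ENNReal.ofReal (P.C2 β * (2 ^ (p - 1) * 2 ^ m * (K * 2 ^ ((m:ℝ) + s * p))) * (4 / c' + 2)) *
        gagliardoPow m s p (ω \ Q) u +
      ENNReal.ofReal (P.C2 β * (2 ^ (p - 1) * 2 ^ m * (K * 2 ^ ((m:ℝ) + s * p))) * (4 / c' + 2) * T) *
        gagliardoPow m s p ω u := by
  set E := ω \ Q with hEdef
  have hEm : MeasurableSet E := hω.diff hQm
  have hEQ : ω = E ∪ Q := (diff_union_of_subset hQω).symm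
  set A0 : ℝ := 2 ^ (p - 1) * 2 ^ m * (K * 2 ^ ((m:ℝ) + s * p)) with hA0
  have hA0p : 0 < A0 := by positivity
  have hC2 : 0 < P.C2 β := by
    have := P.C1_ge
    have := Real.rpow_pos_of_pos P.Clow_pos β
    unfold C2; positivity
  have hδ := P.hδ0
  have hδ1 := P.hδ1
  have hT0 : 0 < T := hδ.trans_le hT1
  rw [P.gagl_cov s p u ω hω]
  have hsplit := split4 (P.kk p (m + s * p) u) (fun X Y => ‖u X - u Y‖ₑ ^ p * Wk β g (X - Y))
    (W_meas p β g u hu) E Q hEm hQm (ENNReal.ofReal (P.C2 β)) (ENNReal.ofReal (P.C2 β * P.δ))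
    ENNReal.ofReal_ne_top ENNReal.ofReal_ne_top
    (fun X Y => by
      have := P.kk_le p _ hp u X Y 1 β g (Or.inl (P.f_le X)) hnd hβ hβ0 hg0 hg hθ
      rwa [mul_one] at this)
    (fun X Y h => P.kk_le p _ hp u X Y P.δ β g
      (h.imp (fun h => (hQf X h).le) (fun h => (hQf Y h).le)) hnd hβ hβ0 hg0 hg hθ)
  rw [← hEQ] at hsplit
  refine hsplit.trans ?_
  clear hsplit
  rw [W_swap p β g u hu Q E]
  set GE := gagliardoPow m s p E u with hGE
  set Gω := gagliardoPow m s p ω u with hGω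
  have b1 : ∫⁻ X in E, ∫⁻ Y in E, ‖u X - u Y‖ₑ ^ p * Wk β g (X - Y) ≤ ENNReal.ofReal (A0 / c') * (GE + GE) :=
    averaging hp hK hK0 u hu E E hEm hEm c' hc' fun X hX Y hY h => hregE X hX Y hY.1 h
  have b2 : ∫⁻ X in E, ∫⁻ Y in Q, ‖u X - u Y‖ₑ ^ p * Wk β g (X - Y) ≤ ENNReal.ofReal (A0 / c') * (GE + Gω) := by
    refine (averaging hp hK hK0 u hu E Q hEm hQm c' hc' fun X hX Y hY h => hregE X hX Y (hQω hY) h).trans ?_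
    gcongr
    · exact le_rfl
    · exact gagl_mono s p u hQω diff_subset
  have b3 : ∫⁻ X in Q, ∫⁻ Y in Q, ‖u X - u Y‖ₑ ^ p * Wk β g (X - Y) ≤ ENNReal.ofReal (A0 / cb) * (Gω + Gω) := by
    refine (averaging hp hK hK0 u hu Q Q hQm hQm cb hcb hregQ).trans ?_
    gcongr
    · exact gagl_mono s p u hQω hQω
    · exact gagl_mono s p u hQω hQω
  calc _ ≤ ENNReal.ofReal (P.C2 β) * (ENNReal.ofReal (A0 / c') * (GE + GE)) +
        ENNReal.ofReal (P.C2 β * P.δ) * (ENNReal.ofReal (A0 / c') * (GE + Gω)) +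
        ENNReal.ofReal (P.C2 β * P.δ) * (ENNReal.ofReal (A0 / c') * (GE + Gω)) +
        ENNReal.ofReal (P.C2 β * P.δ) * (ENNReal.ofReal (A0 / cb) * (Gω + Gω)) := by gcongr
    _ = ENNReal.ofReal (P.C2 β * (A0 / c') * 2 + P.C2 β * P.δ * (A0 / c') * 2) * GE +
        ENNReal.ofReal (P.C2 β * P.δ * (A0 / c') * 2 + P.C2 β * P.δ * (A0 / cb) * 2) * Gω := by
      rw [ENNReal.ofReal_add (by positivity) (by positivity), ENNReal.ofReal_add (by positivity) (by positivity),
        ENNReal.ofReal_mul (q := 2) (by positivity), ENNReal.ofReal_mul (q := 2) (by positivity),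
        ENNReal.ofReal_mul (q := 2) (by positivity),
        ENNReal.ofReal_mul (q := A0 / c') (by positivity), ENNReal.ofReal_mul (q := A0 / c') (by positivity),
        ENNReal.ofReal_mul (q := A0 / cb) (by positivity)]
      simp only [ENNReal.ofReal_ofNat]
      ring
    _ ≤ _ := by
      gcongr
      · have : P.C2 β * P.δ * (A0 / c') * 2 ≤ P.C2 β * 1 * (A0 / c') * 2 := by gcongr
        have e : P.C2 β * A0 * (4 / c' + 2) = P.C2 β * (A0 / c') * 2 + P.C2 β * 1 * (A0 / c') * 2 + P.C2 β * A0 * 2 := by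
          field_simp; ring
        have : 0 < P.C2 β * A0 * 2 := by positivity
        linarith
      · have h1 : P.C2 β * P.δ * (A0 / c') * 2 ≤ P.C2 β * T * (A0 / c') * 2 := by gcongr
        have h2 : P.C2 β * P.δ * (A0 / cb) * 2 ≤ P.C2 β * (T * cb) * (A0 / cb) * 2 := by gcongr
        have e : P.C2 β * A0 * (4 / c' + 2) * T = P.C2 β * T * (A0 / c') * 2 + P.C2 β * (T * cb) * (A0 / cb) * 2
           + P.C2 β * A0 * 2 / c' * T := by
          field_simp; ring
        have : 0 < P.C2 β * A0 * 2 / c' * T := by positivity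
        linarith

theorem main_lp {ν : ℕ} (p T : ℝ) (u : Eucl m → Eucl ν) (hT : P.δ ≤ T) (hnd : 2 ≤ P.n * P.d)
    (ω Q : Set (Eucl m)) (hω : MeasurableSet ω) (hQm : MeasurableSet Q) (hQω : Q ⊆ ω)
    (hQf : ∀ X ∈ Q, P.f X = P.δ) :
    ∫⁻ x in P.Phi ⁻¹' ω, ‖u (P.Phi x)‖ₑ ^ p ≤ ENNReal.ofReal P.C1 * (∫⁻ X in ω \ Q, ‖u X‖ₑ ^ p) +
      ENNReal.ofReal (P.C1 * T) * ∫⁻ X in ω, ‖u X‖ₑ ^ p := by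
  have hC := P.C1_ge
  rw [P.cov ω hω]
  simp only [P.Phi_Psi]
  have hEQ : ω = (ω \ Q) ∪ Q := (diff_union_of_subset hQω).symm
  conv_lhs => rw [hEQ]
  refine (lintegral_union_le _ _ _).trans (add_le_add ?_ ?_)
  · rw [← lintegral_const_mul' _ _ ENNReal.ofReal_ne_top]
    refine lintegral_mono fun X => ?_
    gcongr
    refine (P.det_le X).trans (mul_le_of_le_one_right (by linarith) (pow_le_one₀ (P.f_pos X).le (P.f_le X)))
  · refine le_trans ?_ (mul_le_mul_right (lintegral_mono_set hQω) _)
    rw [← lintegral_const_mul' _ _ ENNReal.ofReal_ne_top]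
    refine setLIntegral_mono' hQm fun X hX => ?_
    gcongr
    refine (P.det_le X).trans ?_
    rw [hQf X hX]
    gcongr
    exact (pow_le_of_le_one P.hδ0.le P.hδ1.le (by omega)).trans hT

end Par
end ShrinkAux

namespace ShrinkAux

theorem root_step {p C C3 T : ℝ} (hp : 1 ≤ p) (hC : 1 ≤ C) (hC3 : C3 ≤ C) (hT : 0 < T) {A G1 G2 : ℝ≥0∞}
    (h : A ≤ ENNReal.ofReal C3 * G1 + ENNReal.ofReal (C3 * T) * G2) :
    A ^ (1 / p) ≤ ENNReal.ofReal C * G1 ^ (1 / p) + ENNReal.ofReal (C * T ^ (1 / p)) * G2 ^ (1 / p) := by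
  have hp0 : 0 < p := by linarith
  have h1p : 0 ≤ 1 / p := by positivity
  have h1p1 : 1 / p ≤ 1 := by rw [div_le_one hp0]; exact hp
  have hroot : C ^ (1 / p) ≤ C := by
    calc C ^ (1 / p) ≤ C ^ (1:ℝ) := Real.rpow_le_rpow_of_exponent_le hC h1p1
      _ = C := Real.rpow_one C
  have h' : A ≤ ENNReal.ofReal C * G1 + ENNReal.ofReal (C * T) * G2 := h.trans (by gcongr)
  calc A ^ (1 / p) ≤ (ENNReal.ofReal C * G1 + ENNReal.ofReal (C * T) * G2) ^ (1 / p) :=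
        ENNReal.rpow_le_rpow h' h1p
    _ ≤ (ENNReal.ofReal C * G1) ^ (1 / p) + (ENNReal.ofReal (C * T) * G2) ^ (1 / p) :=
        ENNReal.rpow_add_le_add_rpow _ _ h1p h1p1
    _ = ENNReal.ofReal (C ^ (1 / p)) * G1 ^ (1 / p) + ENNReal.ofReal (C ^ (1 / p) * T ^ (1 / p)) * G2 ^ (1 / p) := by
        rw [ENNReal.mul_rpow_of_nonneg _ _ h1p, ENNReal.mul_rpow_of_nonneg _ _ h1p,
          ENNReal.ofReal_rpow_of_pos (by linarith), ENNReal.ofReal_rpow_of_pos (by positivity),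
          Real.mul_rpow (by linarith) hT.le]
    _ ≤ _ := by gcongr

theorem rect_open (m d : ℕ) (a b : ℝ) : IsOpen (rect m d a b) := by
  have : rect m d a b = ⋂ i : Fin m, {x : Eucl m | |x i| < if (i:ℕ) < d then a else b} := by
    ext x
    simp only [rect, mem_ofPred_eq, mem_iInter]
    refine forall_congr' fun i => ?_
    by_cases hi : (i:ℕ) < d
    · simp [hi]
    · simp [hi, not_lt.1 hi]
  rw [this]
  refine isOpen_iInter_of_finite fun i => ?_
  exact isOpen_lt (by fun_prop) continuous_const

theorem rect_convex (m d : ℕ) (a b : ℝ) : Convex ℝ (rect m d a b) := by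
  intro x hx y hy s t hs ht hst i
  have key : ∀ r : ℝ, |x i| < r → |y i| < r → |s * x i + t * y i| < r := by
    intro r h1 h2
    have := (convex_ball (0:ℝ) r) (by simpa using h1 : x i ∈ ball (0:ℝ) r) (by simpa using h2 : y i ∈ ball (0:ℝ) r) hs ht hst
    simpa using this
  constructor
  · intro hi; exact key a ((hx i).1 hi) ((hy i).1 hi)
  · intro hi; exact key b ((hx i).2 hi) ((hy i).2 hi)

theorem rect_bounded (m d : ℕ) (a b : ℝ) : Bornology.IsBounded (rect m d a b) := by
  refine (isBounded_iff_forall_norm_le).2 ⟨∑ i : Fin m, max a b, fun x hx => ?_⟩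
  refine (Par.norm_le_sum x).trans (Finset.sum_le_sum fun i _ => ?_)
  by_cases hi : (i:ℕ) < d
  · exact ((hx i).1 hi).le.trans (le_max_left _ _)
  · exact ((hx i).2 (by omega)).le.trans (le_max_right _ _)

theorem rect_pos (m d : ℕ) (a b : ℝ) (ha : 0 < a) (hb : 0 < b) : 0 < volume (rect m d a b) := by
  refine (rect_open m d a b).measure_pos volume ⟨0, fun i => ?_⟩
  simp [ha, hb]

end ShrinkAux

open ShrinkAux

/-- **Shrinking construction (building block, case `0 < s < 1`).** -/
theorem shrinking_block_fractional
    (m ν : ℕ) (s p : ℝ) (hs0 : 0 < s) (hs1 : s < 1) (hp : 1 ≤ p)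
    (d : ℕ) (hd1 : 1 ≤ d) (hdm : d ≤ m) (hdsp : s * p < d)
    (rlow rup : ℝ) (hrl0 : 0 < rlow) (hrl1 : rlow < 1) (hru0 : 0 < rup) (hru1 : rup < 1)
    (c c' : ℝ) (hc : 0 < c) (hc' : 0 < c') :
    ∃ C : ℝ, 0 < C ∧
      ∀ (η μ : ℝ), 0 < η → 0 < μ → μ / rup < 1 →
        ∀ τ : ℝ, 0 < τ → τ < rlow →
          ∃ (Φ : Eucl m → Eucl m) (lam : Eucl m → ℝ),
            ContDiff ℝ (⊤ : ℕ∞) Φ ∧ Function.Injective Φ ∧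
            (∀ x, 1 ≤ lam x) ∧
            (∀ x, ∀ i : Fin m, ((i : ℕ) < d → Φ x i = lam x * x i) ∧
              (d ≤ (i : ℕ) → Φ x i = x i)) ∧
            (∀ x, x ∉ rect m d (μ * η) ((1 - μ) * η) → Φ x = x) ∧
            rect m d (rlow * μ * η) ((1 - μ / rup) * η)
              ⊆ Φ '' cylinder m d (τ * μ * η) ((1 - μ / rup) * η) ∧
            ∀ ω : Set (Eucl m), MeasurableSet ω →
              rect m d (rlow * μ * η) ((1 - μ / rup) * η) ⊆ ω →
              ω ⊆ Metric.ball 0 (c * μ * η) →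
              (∀ z ∈ ω \ rect m d (rlow * μ * η) ((1 - μ / rup) * η), ∀ t : ℝ, 0 < t →
                2 * ENNReal.ofReal t ≤ EMetric.diam ω →
                ENNReal.ofReal (c' * t ^ m) ≤
                  volume (Metric.ball z t ∩ (ω \ rect m d (rlow * μ * η) ((1 - μ / rup) * η)))) →
              ∀ u : Eucl m → Eucl ν, Measurable u →
                gagliardoSeminorm m s p (Φ ⁻¹' ω) (fun x => u (Φ x))
                  ≤ ENNReal.ofReal C *
                      gagliardoSeminorm m s p (ω \ rect m d (rlow * μ * η) ((1 - μ / rup) * η)) u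
                    + ENNReal.ofReal (C * τ ^ ((d - s * p) / p)) * gagliardoSeminorm m s p ω u ∧
                eLpNorm (fun x => u (Φ x)) (ENNReal.ofReal p) (volume.restrict (Φ ⁻¹' ω))
                  ≤ ENNReal.ofReal C *
                      eLpNorm u (ENNReal.ofReal p)
                        (volume.restrict (ω \ rect m d (rlow * μ * η) ((1 - μ / rup) * η)))
                    + ENNReal.ofReal (C * τ ^ ((d : ℝ) / p)) *
                        eLpNorm u (ENNReal.ofReal p) (volume.restrict ω) := by
  have hm : 0 < m := hd1.trans hdm
  have hmR : (0:ℝ) < m := by exact_mod_cast hm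
  have hdmR : (d:ℝ) ≤ m := by exact_mod_cast hdm
  have hd1R : (1:ℝ) ≤ d := by exact_mod_cast hd1
  have hp0 : 0 < p := by linarith
  have hsp : 0 < s * p := by positivity
  have hgap : 0 < (d:ℝ) - s * p := by linarith
  -- exponents
  obtain ⟨q, hq1, hqe, hqa⟩ : ∃ q : ℕ, 1 ≤ q ∧ Even q ∧ m * rlow ^ q < 1 := by
    obtain ⟨k, hk⟩ := exists_pow_lt_of_lt_one (by positivity : (0:ℝ) < 1 / m) hrl1
    refine ⟨2 * (k + 1), by omega, even_two_mul _, ?_⟩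
    have : rlow ^ (2 * (k + 1)) ≤ rlow ^ k := pow_le_pow_of_le_one hrl0.le hrl1.le (by omega)
    calc m * rlow ^ (2 * (k+1)) < m * (1 / m) := by
          gcongr; exact this.trans_lt hk
      _ = 1 := by field_simp
  obtain ⟨n, hn3, hn⟩ : ∃ n : ℕ, 3 ≤ n ∧ 6 ≤ n * ((d:ℝ) - s * p) := by
    refine ⟨⌈6 / ((d:ℝ) - s * p)⌉₊ + 3, by omega, ?_⟩
    have := Nat.le_ceil (6 / ((d:ℝ) - s * p))
    rw [div_le_iff₀ hgap] at this
    push_cast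
    nlinarith
  set g0 : ℝ := 1 - ((d:ℝ) - s * p) / (2 * m) with hg0def
  have hg00 : 0 ≤ g0 := by
    rw [hg0def, sub_nonneg, div_le_one (by positivity)]; linarith
  have hg01 : g0 < 1 := by
    rw [hg0def]; have : 0 < ((d:ℝ) - s * p) / (2 * m) := by positivity
    linarith
  set g : Fin m → ℝ := fun i => if (i:ℕ) < d then 0 else g0 with hgdef
  have hgi0 : ∀ i, 0 ≤ g i := by intro i; simp only [hgdef]; split_ifs; exacts [le_rfl, hg00]
  have hgi1 : ∀ i, g i < 1 := by intro i; simp only [hgdef]; split_ifs; exacts [zero_lt_one, hg01]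
  have hgh : ∀ i : Fin m, (i:ℕ) < d → g i = 0 := by intro i hi; simp [hgdef, hi]
  have hgsum : ∑ i, g i = g0 * (m - d) := by
    have h1 : ∑ i : Fin m, g i = ∑ i : Fin m, (g0 - if (i:ℕ) < d then g0 else 0) :=
      Finset.sum_congr rfl fun i _ => by simp only [hgdef]; split_ifs <;> simp
    rw [h1, Finset.sum_sub_distrib, ← Finset.sum_filter]
    simp [Fin.card_filter_val_lt, hdm]
    ring
  set β : ℝ := m + s * p - g0 * (m - d) with hβdef
  have hβ0 : 0 < β := by
    have : g0 * ((m:ℝ) - d) ≤ 1 * (m - d) := mul_le_mul_of_nonneg_right hg01.le (by linarith)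
    rw [hβdef]; linarith
  have hθ : β + ∑ i, g i = m + s * p := by rw [hgsum, hβdef]; ring
  have hβn : n * β ≤ 2 * (n * d : ℕ) - 3 := by
    have h1 : (1 - g0) * ((m:ℝ) - d) ≤ ((d:ℝ) - s * p) / 2 := by
      have e : 1 - g0 = ((d:ℝ) - s * p) / (2 * m) := by rw [hg0def]; ring
      rw [e]
      calc ((d:ℝ) - s * p) / (2 * m) * (m - d) ≤ ((d:ℝ) - s * p) / (2 * m) * m := by
            gcongr; linarith
        _ = _ := by field_simp
    have h2 : β ≤ 2 * d - ((d:ℝ) - s * p) / 2 := by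
      have : β = d + s * p + (1 - g0) * (m - d) := by rw [hβdef]; ring
      rw [this]; linarith
    have h3 : (n:ℝ) * β ≤ n * (2 * d - ((d:ℝ) - s * p) / 2) := by gcongr
    push_cast
    linarith
  have hnd : 2 ≤ n * d := by nlinarith
  obtain ⟨K, hK0, hK⟩ := Wk_int hm g hgi0 hgi1 β hβ0
  rw [hθ] at hK
  -- constants
  set a : ℝ := m * rlow ^ q with hadef
  set C1c : ℝ := 1 + n * sK ^ 2 * q / (1 - a) with hC1c
  set Clc : ℝ := m * (2 * (m + 2 * m * n * sK ^ 2 * (1 / (1 / rup - 1))) + 1) with hClc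
  set C3 : ℝ := C1c ^ 2 * Clc ^ β * (2 ^ (p - 1) * 2 ^ m * (K * 2 ^ ((m:ℝ) + s * p))) * (4 / c' + 2) with hC3
  refine ⟨max 1 (max C3 C1c), lt_max_of_lt_left one_pos, ?_⟩
  intro η μ hη hμ hμr τ hτ0 hτ1
  set C := max 1 (max C3 C1c) with hC
  have hC_1 : 1 ≤ C := le_max_left _ _
  have hC_3 : C3 ≤ C := (le_max_left _ _).trans (le_max_right _ _)
  have hC_C1 : C1c ≤ C := (le_max_right _ _).trans (le_max_right _ _)
  have hrec : 0 < 1 / rup - 1 := by rw [sub_pos]; exact (one_lt_div hru0).2 hru1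
  set L := μ * η with hL
  set B := (1 - μ / rup) * η with hB
  have hL0 : 0 < L := by positivity
  have hB0 : 0 < B := mul_pos (by linarith) hη
  set v := (1 / rup - 1) * L with hv
  have hv0 : 0 < v := by positivity
  have hBv : (1 - μ) * η = B + v := by rw [hB, hv, hL]; field_simp; ring
  have hrL : rlow * μ * η = rlow * L := by rw [hL]; ring
  have hτL : τ * μ * η = τ * L := by rw [hL]; ring
  rw [hBv, hrL, hτL]
  obtain ⟨cb, hcb0, hcb⟩ := convex_reg (rect m d (rlow * L) B) (rect_convex _ _ _ _) (rect_bounded _ _ _ _)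
    (rect_pos _ _ _ _ (by positivity) hB0)
  set T1 : ℝ := τ ^ ((d:ℝ) - s * p) with hT1
  set T2 : ℝ := τ ^ (d:ℝ) with hT2
  have hT10 : 0 < T1 := Real.rpow_pos_of_pos hτ0 _
  have hT20 : 0 < T2 := Real.rpow_pos_of_pos hτ0 _
  obtain ⟨δ, hδ0, hδ1, hδT1, hδcb, hδT2, hδτ⟩ : ∃ δ : ℝ, 0 < δ ∧ δ < 1 ∧ δ ≤ T1 ∧ δ ≤ T1 * cb ∧ δ ≤ T2 ∧ δ ≤ τ / m := by
    refine ⟨min (1/2) (min T1 (min (T1 * cb) (min T2 (τ / m)))), by positivity, ?_, ?_, ?_, ?_, ?_⟩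
    · exact (min_le_left _ _).trans_lt (by norm_num)
    · exact (min_le_right _ _).trans (min_le_left _ _)
    · exact (min_le_right _ _).trans ((min_le_right _ _).trans (min_le_left _ _))
    · exact (min_le_right _ _).trans ((min_le_right _ _).trans ((min_le_right _ _).trans (min_le_left _ _)))
    · exact (min_le_right _ _).trans ((min_le_right _ _).trans ((min_le_right _ _).trans (min_le_right _ _)))
  let P : Par m :=
    { d := d, n := n, q := q, L := L, B := B, v := v, a := a, δ := δ, ρ := rlow
      hn := by omega, hq := hq1, hqe := hqe, hL := hL0, hB := hB0, hv := hv0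
      ha0 := by positivity, ha1 := hqa, hδ0 := hδ0, hδ1 := hδ1, hd1 := hd1, hdm := hdm
      hρ0 := hrl0, hρ := le_rfl }
  have hPC1 : P.C1 = C1c := rfl
  have hPCl : P.Clow = Clc := by
    have : L / v = 1 / (1 / rup - 1) := by rw [hv]; field_simp
    change (m:ℝ) * (2 * (m + 2 * m * n * sK ^ 2 * (L / v)) + 1) = Clc
    rw [this]
  have hPC2 : P.C2 β = C1c ^ 2 * Clc ^ β := by rw [Par.C2, hPC1, hPCl]
  refine ⟨P.Phi, fun x => (P.kap (P.Phi x))⁻¹, P.Phi_contDiff, P.Phi_inj, fun x => ?_, P.Phi_coord,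
    P.Phi_out, ?_, ?_⟩
  · exact (one_le_inv₀ (P.kap_pos _)).2 (P.kap_le _)
  · refine P.rect_sub_image τ ?_
    change m * δ * rlow < τ
    have h1 : m * δ ≤ τ := by rwa [le_div_iff₀ hmR, mul_comm] at hδτ
    calc m * δ * rlow ≤ τ * rlow := by gcongr
      _ < τ * 1 := by gcongr
      _ = τ := mul_one τ
  · intro ω hω hQω _ hreg u hu
    set Q := rect m d (rlow * L) B with hQ
    have hQm : MeasurableSet Q := (rect_open _ _ _ _).measurableSet
    have hQf : ∀ X ∈ Q, P.f X = P.δ := fun X hX => P.f_eq_in X hX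
    constructor
    · have hmain := P.main_gagl s p β K c' cb T1 hp g u hu hnd hβn hβ0 hgi0 hgh hθ hK hK0 hc' hcb0 hδT1 hδcb
        ω Q hω hQm hQω hQf (fun X hX Y hY hXY => hreg X hX _ (by
            have := norm_pos_iff.2 (sub_ne_zero.2 hXY); positivity) (by
            have h2 : (2:ℝ≥0∞) * ENNReal.ofReal (‖X - Y‖ / 2) = edist X Y := by
              rw [edist_dist, dist_eq_norm]
              generalize ‖X - Y‖ = r
              rw [← ENNReal.ofReal_ofNat, ← ENNReal.ofReal_mul (by norm_num)]
              congr 1; ring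
            rw [h2]
            exact Metric.edist_le_ediam_of_mem hX.1 hY)) hcb
      rw [hPC2] at hmain
      have := root_step hp hC_1 hC_3 hT10 hmain
      unfold gagliardoSeminorm
      have e : T1 ^ (1 / p) = τ ^ (((d:ℝ) - s * p) / p) := by
        rw [hT1, ← Real.rpow_mul hτ0.le]; congr 1; ring
      rwa [e] at this
    · have hmain := P.main_lp p T2 u hδT2 hnd ω Q hω hQm hQω hQf
      rw [hPC1] at hmain
      have := root_step hp hC_1 hC_C1 hT20 hmain
      have e : T2 ^ (1 / p) = τ ^ ((d:ℝ) / p) := by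
        rw [hT2, ← Real.rpow_mul hτ0.le]; congr 1; ring
      rw [e] at this
      have h0 : ENNReal.ofReal p ≠ 0 := by simpa using hp0
      rw [eLpNorm_eq_lintegral_rpow_enorm_toReal h0 ENNReal.ofReal_ne_top,
        eLpNorm_eq_lintegral_rpow_enorm_toReal h0 ENNReal.ofReal_ne_top,
        eLpNorm_eq_lintegral_rpow_enorm_toReal h0 ENNReal.ofReal_ne_top, ENNReal.toReal_ofReal hp0.le]
      exact this
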